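/- Fix 0 < b ≤ a, t > 0, and δ > 0. For m ≤ n and a weight function ω : {1,…,m}×{1,…,n} → [b², a²], let C(ω) := (√(ω(i,j))) ∈ ℝ^{m×n}, A(ω) := [[0, C(ω)], [−C(ω)ᵀ, 0]] of size N = m+n, Φ(t, A(ω)) its weighted matching polynomial (times √t if N is odd), and Y_{A(ω)} the random skew-symmetric matrix built from i.i.d. standard Gaussians. Then lim_{n→∞} sup_{m ≤ n} sup_{ω : {1,…,m}×{1,…,n} → [b²,a²]} Pr( (1/(m+n)) | log det(√t I_N + Y_{A(ω)}) − log Φ(t, A(ω)) | > δ ) = 0. -/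

import Mathlib

/-!
Write `X = det (t I + H Hᵀ)` for the `m × n` matrix `H = (√(w i j) * G i j)` with Gaussian `G`. By a
Schur complement `det (√t I + Y) = √t ^ (n - m) * X` (`det_sampleY`), and the matching polynomial is
`√t ^ (n - m) * Ψ`, where `Ψ` is the generating function `matchGen` of the bipartite matchings
(`PhiFull_bipartiteSkew`); moreover `E X = Ψ` (`integral_detMask`). The variable
`ψ = X / Ψ - 1 - log (X / Ψ)` is nonnegative, has mean `log Ψ - E log X`, and is large whenever
`|log X - log Ψ|` is. By Markov's inequality (`tail_bound`) it is therefore enough to show that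
`log Ψ - E log X = o(n)`, uniformly in `m` and in the weights.

This is done row by row. A new row `g` multiplies the determinant by `t + gᵀ B g`, where `B` is a
regularised projection with `0 ≤ B² ≤ B ≤ I`; given `k` other rows and a set `J` of deleted columns, its
trace is at least `n - |J| - k` (`resid_isShrink`). If the trace is at least `q`, this factor has
relative variance `O(1 / q)`, so that `E log` falls short of `log E` by at most
`rowLoss = O(log n / q)` (`log_rowForm`). Averaging out the row replaces the determinant by a nonnegative
combination of determinants with further columns deleted, and the row factor of such a mixture is
governed by a convex combination of the matrices `B`, to which the same estimate applies; induction on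
the number of rows gives `log_mixture`. This needs about `q` more columns than rows. The at most `q`
surplus rows are discarded, each at a cost `lossEll = O(log n)` (`log_drop_row`). With `q ≈ √n` the total
loss is `O(√n log n)` (`totalLoss_le`).
-/

open MeasureTheory ProbabilityTheory Matrix

/-- Total weighted `k`-matching of the weighted graph encoded by the
skew-symmetric matrix `A`. -/
noncomputable def phiW {N : ℕ} (A : Matrix (Fin N) (Fin N) ℝ) (k : ℕ) : ℝ :=
  ∑ M ∈ Finset.univ.filter
      (fun M : Finset (Fin N × Fin N) =>
        ((∀ p ∈ M, p.1 < p.2) ∧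
          ∀ p ∈ M, ∀ q ∈ M, p ≠ q →
            p.1 ≠ q.1 ∧ p.1 ≠ q.2 ∧ p.2 ≠ q.1 ∧ p.2 ≠ q.2) ∧ M.card = k),
    ∏ p ∈ M, (A p.1 p.2) ^ 2

/-- The weighted matching polynomial `Φ(t, A)`. -/
noncomputable def PhiW {N : ℕ} (A : Matrix (Fin N) (Fin N) ℝ) (t : ℝ) : ℝ :=
  ∑ k ∈ Finset.range (N / 2 + 1), phiW A k * t ^ (N / 2 - k)

/-- `Φ(t,A)`, multiplied by `√t` when `N` is odd. -/
noncomputable def PhiFull {N : ℕ} (A : Matrix (Fin N) (Fin N) ℝ) (t : ℝ) : ℝ :=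
  (if Even N then 1 else Real.sqrt t) * PhiW A t

/-- Index type of the strictly upper-triangular positions. -/
abbrev PairIdx (N : ℕ) := {p : Fin N × Fin N // p.1 < p.2}

/-- The canonical product of standard Gaussian measures, one for each edge slot. -/
noncomputable def gaussPi (N : ℕ) : Measure (PairIdx N → ℝ) :=
  Measure.pi fun _ => gaussianReal 0 1

/-- The sample `Y_A(ξ)` of the random skew-symmetric matrix `Y_A`. -/
noncomputable def sampleY {N : ℕ} (A : Matrix (Fin N) (Fin N) ℝ)
    (ξ : PairIdx N → ℝ) : Matrix (Fin N) (Fin N) ℝ :=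
  Matrix.of fun i j =>
    if h : i < j then A i j * ξ ⟨(i, j), h⟩
    else if h : j < i then A i j * ξ ⟨(j, i), h⟩
    else 0

/-- `log Φ̃(t, A) = E log det(√t I_N + Y_A)` for i.i.d. standard Gaussian entries. -/
noncomputable def logPhiTilde {N : ℕ} (t : ℝ) (A : Matrix (Fin N) (Fin N) ℝ) : ℝ :=
  ∫ ξ, Real.log ((Real.sqrt t • (1 : Matrix (Fin N) (Fin N) ℝ) + sampleY A ξ).det) ∂(gaussPi N)

/-- The constant `C₁ = -(1/√(2π)) ∫ log(x²) e^{-x²/2} dx`. -/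
noncomputable def C1 : ℝ :=
  -(Real.sqrt (2 * Real.pi))⁻¹ * ∫ x : ℝ, Real.log (x ^ 2) * Real.exp (-x ^ 2 / 2)

/-- The skew-symmetric matrix of the weighted complete bipartite graph `K_{m,n,ω}`,
`A(ω) = [[0, C(ω)], [-C(ω)ᵀ, 0]]` with `C(ω)_{ij} = √(ω(i,j))`, reindexed to
`Fin (m + n)`. -/
noncomputable def bipartiteSkew {m n : ℕ} (w : Fin m → Fin n → ℝ) :
    Matrix (Fin (m + n)) (Fin (m + n)) ℝ :=
  Matrix.reindex finSumFinEquiv finSumFinEquiv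
    (Matrix.fromBlocks 0 (Matrix.of fun i j => Real.sqrt (w i j))
      (-(Matrix.of fun i j => Real.sqrt (w i j))ᵀ) 0)

/-! ### Gaussian moments of quadratic forms -/

/-- The law of a row of `n` independent standard Gaussians. -/
noncomputable def rowMeas (n : ℕ) : Measure (Fin n → ℝ) :=
  Measure.pi fun _ => gaussianReal 0 1

instance (n : ℕ) : IsProbabilityMeasure (rowMeas n) := by
  unfold rowMeas; infer_instance

/-- The `k`-th moment of the standard Gaussian. -/
noncomputable def gaussMoment (k : ℕ) : ℝ := ∫ x, x ^ k ∂(gaussianReal 0 1)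

lemma integrable_pow_gaussian (k : ℕ) : Integrable (fun x : ℝ => x ^ k) (gaussianReal 0 1) := by
  have h : MemLp (id : ℝ → ℝ) k (gaussianReal 0 1) := memLp_id_gaussianReal' _ (by simp)
  refine (h.integrable_norm_pow' ).mono' (by fun_prop) ?_
  exact Filter.Eventually.of_forall fun x => by simp

lemma gaussMoment_zero : gaussMoment 0 = 1 := by simp [gaussMoment]

lemma gaussMoment_two : gaussMoment 2 = 1 := by
  have h := variance_fun_id_gaussianReal (μ := 0) (v := 1)
  rw [variance_eq_integral (by fun_prop)] at h
  simpa [gaussMoment] using h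

lemma gaussMoment_odd {k : ℕ} (hk : Odd k) : gaussMoment k = 0 := by
  have h : (gaussianReal 0 1).map (fun x : ℝ => -x) = gaussianReal 0 1 := by
    simpa using gaussianReal_map_neg (μ := 0) (v := 1)
  have h2 : gaussMoment k = - gaussMoment k := by
    conv_lhs => rw [gaussMoment, ← h]
    rw [integral_map (by fun_prop) (by fun_prop), gaussMoment, ← integral_neg]
    simp [hk.neg_pow]
  linarith

lemma gaussMoment_four_nonneg : 0 ≤ gaussMoment 4 :=
  integral_nonneg fun x => by positivity

lemma integral_monomial {n : ℕ} (e : Fin n → ℕ) :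
    ∫ x, ∏ s, x s ^ e s ∂(rowMeas n) = ∏ s, gaussMoment (e s) := by
  unfold rowMeas gaussMoment
  exact integral_fintype_prod_eq_prod (fun s (x : ℝ) => x ^ e s)

lemma integrable_monomial {n : ℕ} (e : Fin n → ℕ) :
    Integrable (fun x : Fin n → ℝ => ∏ s, x s ^ e s) (rowMeas n) := by
  unfold rowMeas
  exact Integrable.fintype_prod (f := fun s (x : ℝ) => x ^ e s)
    (fun s => integrable_pow_gaussian _)

/-- A quadratic monomial as a product of powers over all coordinates, the form in which
`integral_monomial` applies. -/
lemma mono2 {n : ℕ} (i j : Fin n) (x : Fin n → ℝ) :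
    x i * x j = ∏ s, x s ^ ((if s = i then 1 else 0) + (if s = j then 1 else 0)) := by
  simp only [pow_add, Finset.prod_mul_distrib]
  simp [pow_ite]

lemma mono4 {n : ℕ} (i j k l : Fin n) (x : Fin n → ℝ) :
    x i * x j * (x k * x l) = ∏ s, x s ^ (((if s = i then 1 else 0) + (if s = j then 1 else 0))
      + ((if s = k then 1 else 0) + (if s = l then 1 else 0))) := by
  rw [mono2, mono2, ← Finset.prod_mul_distrib]
  simp only [pow_add]

lemma integrable_mono2 {n : ℕ} (i j : Fin n) :
    Integrable (fun x : Fin n → ℝ => x i * x j) (rowMeas n) := by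
  simp only [mono2]; exact integrable_monomial _

lemma integrable_mono4 {n : ℕ} (i j k l : Fin n) :
    Integrable (fun x : Fin n → ℝ => x i * x j * (x k * x l)) (rowMeas n) := by
  simp only [mono4]; exact integrable_monomial _

lemma integral_mono2 {n : ℕ} (i j : Fin n) :
    ∫ x, x i * x j ∂(rowMeas n) = if i = j then 1 else 0 := by
  simp only [mono2, integral_monomial]
  split_ifs with h
  · subst h
    refine Finset.prod_eq_one fun s _ => ?_
    split_ifs <;> simp [gaussMoment_zero, gaussMoment_two]
  · refine Finset.prod_eq_zero (Finset.mem_univ i) ?_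
    simp [h, gaussMoment_odd (k := 1) (by decide)]

/-- Wick's formula for fourth moments. The last term is a correction with the uncomputed constant
`gaussMoment 4`; its value `3` is not needed. -/
lemma integral_mono4 {n : ℕ} (i j k l : Fin n) :
    ∫ x, x i * x j * (x k * x l) ∂(rowMeas n) =
      (if i = j then 1 else 0) * (if k = l then 1 else 0)
      + (if i = k then 1 else 0) * (if j = l then 1 else 0)
      + (if i = l then 1 else 0) * (if j = k then 1 else 0)
      + (gaussMoment 4 - 3) * (if i = j ∧ j = k ∧ k = l then 1 else 0) := by
  simp only [mono4, integral_monomial]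
  -- An index of odd multiplicity makes the moment vanish.
  have key : ∀ s : Fin n, Odd (((if s = i then 1 else 0) + (if s = j then 1 else 0))
      + ((if s = k then 1 else 0) + (if s = l then 1 else 0))) →
      ∏ s : Fin n, gaussMoment (((if s = i then 1 else 0) + (if s = j then 1 else 0))
      + ((if s = k then 1 else 0) + (if s = l then 1 else 0))) = 0 := fun s hs =>
    Finset.prod_eq_zero (Finset.mem_univ s) (gaussMoment_odd hs)
  by_cases hij : i = j
  · subst hij
    by_cases hkl : k = l
    · subst hkl
      by_cases hik : i = k
      · subst hik
        rw [Finset.prod_eq_single i]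
        · simp; ring
        · intro s _ hs; simp [hs, gaussMoment_zero]
        · simp
      · rw [Finset.prod_eq_one]
        · simp [hik]
        · intro s _
          by_cases h1 : s = i
          · subst h1; simp [hik, gaussMoment_two]
          · by_cases h2 : s = k <;> simp [h1, h2, Ne.symm hik, gaussMoment_two, gaussMoment_zero]
    · by_cases hik : i = k
      · subst hik
        rw [key l (by simp [Ne.symm hkl])]
        simp [hkl]
      · rw [key k (by simp [hkl, Ne.symm hik])]
        simp [hkl, hik]
  · by_cases hik : i = k
    · subst hik
      by_cases hjl : j = l
      · subst hjl
        rw [Finset.prod_eq_one]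
        · simp [hij]
        · intro s _
          by_cases h1 : s = i
          · subst h1; simp [hij, gaussMoment_two]
          · by_cases h2 : s = j <;> simp [h1, h2, Ne.symm hij, gaussMoment_two, gaussMoment_zero]
      · rw [key j (by simp [Ne.symm hij, hjl])]
        simp [hij, hjl, Ne.symm hij]
    · by_cases hil : i = l
      · subst hil
        by_cases hjk : j = k
        · subst hjk
          rw [Finset.prod_eq_one]
          · simp [hij]
          · intro s _
            by_cases h1 : s = i
            · subst h1; simp [hij, gaussMoment_two]
            · by_cases h2 : s = j <;> simp [h1, h2, Ne.symm hij, gaussMoment_two, gaussMoment_zero]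
        · rw [key j (by simp [Ne.symm hij, hjk])]
          simp [hij, hik, hjk]
      · rw [key i (by simp [hij, hik, hil])]
        simp [hij, hik, hil]

/-- The mean of a quadratic form in a Gaussian row is the trace. -/
lemma integral_quad {n : ℕ} (M : Fin n → Fin n → ℝ) :
    Integrable (fun x => ∑ i, ∑ j, M i j * (x i * x j)) (rowMeas n) ∧
    ∫ x, ∑ i, ∑ j, M i j * (x i * x j) ∂(rowMeas n) = ∑ i, M i i := by
  have hI : ∀ i j, Integrable (fun x : Fin n → ℝ => M i j * (x i * x j)) (rowMeas n) :=
    fun i j => (integrable_mono2 i j).const_mul _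
  refine ⟨integrable_finsetSum _ fun i _ => integrable_finsetSum _ fun j _ => hI i j, ?_⟩
  rw [integral_finsetSum _ fun i _ => integrable_finsetSum _ fun j _ => hI i j]
  refine Finset.sum_congr rfl fun i _ => ?_
  rw [integral_finsetSum _ fun j _ => hI i j]
  simp [integral_const_mul, integral_mono2]

/-- The variance of a quadratic form in a Gaussian row is at most the squared Frobenius norm
times the constant `2 + gaussMoment 4`. -/
lemma integral_quad_sq {n : ℕ} (M : Fin n → Fin n → ℝ) (hM : ∀ i j, M i j = M j i) :
    Integrable (fun x => (∑ i, ∑ j, M i j * (x i * x j)) ^ 2) (rowMeas n) ∧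
    ∫ x, (∑ i, ∑ j, M i j * (x i * x j)) ^ 2 ∂(rowMeas n) ≤
      (∑ i, M i i) ^ 2 + (2 + gaussMoment 4) * ∑ i, ∑ j, M i j ^ 2 := by
  have hexp : ∀ x : Fin n → ℝ, (∑ i, ∑ j, M i j * (x i * x j)) ^ 2 =
      ∑ i, ∑ j, ∑ k, ∑ l, M i j * M k l * (x i * x j * (x k * x l)) := by
    intro x
    rw [sq, Finset.sum_mul]
    refine Finset.sum_congr rfl fun i _ => ?_
    rw [Finset.sum_mul]
    refine Finset.sum_congr rfl fun j _ => ?_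
    rw [Finset.mul_sum]
    refine Finset.sum_congr rfl fun k _ => ?_
    rw [Finset.mul_sum]
    refine Finset.sum_congr rfl fun l _ => ?_
    ring
  simp only [hexp]
  have h4 : ∀ i j k l, Integrable
      (fun x : Fin n → ℝ => M i j * M k l * (x i * x j * (x k * x l))) (rowMeas n) :=
    fun i j k l => (integrable_mono4 i j k l).const_mul _
  have h3 := fun i j k => integrable_finsetSum Finset.univ fun l _ => h4 i j k l
  have h2 := fun i j => integrable_finsetSum Finset.univ fun k _ => h3 i j k
  have h1 := fun i => integrable_finsetSum Finset.univ fun j _ => h2 i j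
  refine ⟨integrable_finsetSum Finset.univ fun i _ => h1 i, ?_⟩
  rw [integral_finsetSum _ fun i _ => h1 i]
  simp_rw [integral_finsetSum _ fun j _ => h2 _ j, integral_finsetSum _ fun k _ => h3 _ _ k,
    integral_finsetSum _ fun l _ => h4 _ _ _ l, integral_const_mul, integral_mono4]
  have e1 : ∑ i, ∑ j, ∑ k, ∑ l, M i j * M k l *
      ((if i = j then (1:ℝ) else 0) * (if k = l then 1 else 0)) = (∑ i, M i i) ^ 2 := by
    rw [sq, Finset.sum_mul]
    refine Finset.sum_congr rfl fun i _ => ?_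
    rw [Finset.mul_sum, Finset.sum_eq_single i (fun j _ h => by simp [h.symm]) (by simp)]
    refine Finset.sum_congr rfl fun k _ => ?_
    rw [Finset.sum_eq_single k (fun j _ h => by simp [h.symm]) (by simp)]
    simp
  have e2 : ∑ i, ∑ j, ∑ k, ∑ l, M i j * M k l *
      ((if i = k then (1:ℝ) else 0) * (if j = l then 1 else 0)) = ∑ i, ∑ j, M i j ^ 2 := by
    refine Finset.sum_congr rfl fun i _ => Finset.sum_congr rfl fun j _ => ?_
    rw [Finset.sum_eq_single i (fun j _ h => by simp [h.symm]) (by simp)]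
    rw [Finset.sum_eq_single j (fun j _ h => by simp [h.symm]) (by simp)]
    simp [sq]
  have e3 : ∑ i, ∑ j, ∑ k, ∑ l, M i j * M k l *
      ((if i = l then (1:ℝ) else 0) * (if j = k then 1 else 0)) = ∑ i, ∑ j, M i j ^ 2 := by
    refine Finset.sum_congr rfl fun i _ => Finset.sum_congr rfl fun j _ => ?_
    rw [Finset.sum_eq_single j (fun j _ h => by simp [h.symm]) (by simp)]
    rw [Finset.sum_eq_single i (fun j _ h => by simp [h.symm]) (by simp)]
    simp [sq, hM j i]
  have e4 : ∑ i, ∑ j, ∑ k, ∑ l, M i j * M k l *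
      ((gaussMoment 4 - 3) * (if i = j ∧ j = k ∧ k = l then (1:ℝ) else 0))
      = (gaussMoment 4 - 3) * ∑ i, M i i ^ 2 := by
    rw [Finset.mul_sum]
    refine Finset.sum_congr rfl fun i _ => ?_
    rw [Finset.sum_eq_single i (fun j _ h => by simp [h.symm]) (by simp)]
    rw [Finset.sum_eq_single i (fun j _ h => by simp [h.symm]) (by simp)]
    rw [Finset.sum_eq_single i (fun j _ h => by simp [h.symm]) (by simp)]
    simp; ring
  have hd : ∑ i, M i i ^ 2 ≤ ∑ i, ∑ j, M i j ^ 2 := Finset.sum_le_sum fun i _ =>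
    Finset.single_le_sum (f := fun j => M i j ^ 2) (fun j _ => sq_nonneg _) (Finset.mem_univ i)
  have hd0 : 0 ≤ ∑ i, M i i ^ 2 := Finset.sum_nonneg fun i _ => sq_nonneg _
  simp only [mul_add, Finset.sum_add_distrib, e1, e2, e3, e4]
  nlinarith [gaussMoment_four_nonneg]

/-! ### The logarithm of a row factor -/

/-- Quadratic upper bound for `-log` around `1`. Below `1 / 2`, where `(1 - R) ^ 2 ≥ 1 / 4`, the a priori
bound `l` is absorbed by the term `4 * l * (1 - R) ^ 2`; elsewhere `-log R ≤ R⁻¹ - 1` suffices. -/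
lemma neg_log_le {R l : ℝ} (hR : 0 < R) (hl : -Real.log R ≤ l) (hl0 : 0 ≤ l) :
    -Real.log R ≤ (1 - R) + (2 + 4 * l) * (1 - R) ^ 2 := by
  by_cases h : R < 1 / 2
  · nlinarith [sq_nonneg (1 - R), mul_nonneg hl0 (show 0 ≤ (1 - R) ^ 2 - 1 / 4 by nlinarith)]
  · push Not at h
    have h1 : -Real.log R ≤ R⁻¹ - 1 := by
      have := Real.log_le_sub_one_of_pos (inv_pos.2 hR)
      rwa [Real.log_inv] at this
    have h2 : R⁻¹ - 1 ≤ (1 - R) + 2 * (1 - R) ^ 2 := by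
      rw [sub_le_iff_le_add, inv_le_iff_one_le_mul₀ hR]
      nlinarith [mul_nonneg (sq_nonneg (1 - R)) (show 0 ≤ R - 1 / 2 by linarith)]
    nlinarith [mul_nonneg hl0 (sq_nonneg (1 - R))]

/-- `B` is symmetric and positive semidefinite, the diagonal of `B ^ 2` is dominated by that of `B`
(which forces the diagonal of `B` into `[0, 1]`), and `B` has trace at least `q`. Unlike being a
projection, this is stable under convex combinations. -/
structure IsShrink {n : ℕ} (q : ℝ) (B : Fin n → Fin n → ℝ) : Prop where
  symm : ∀ i j, B i j = B j i
  nonneg : ∀ x : Fin n → ℝ, 0 ≤ ∑ i, ∑ j, B i j * (x i * x j)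
  row : ∀ i, ∑ j, B i j ^ 2 ≤ B i i
  trace : q ≤ ∑ i, B i i

lemma IsShrink.diag_nonneg {n : ℕ} {q : ℝ} {B : Fin n → Fin n → ℝ} (hB : IsShrink q B) (i : Fin n) :
    0 ≤ B i i := (Finset.sum_nonneg fun _ _ => sq_nonneg _).trans (hB.row i)

lemma IsShrink.diag_le {n : ℕ} {q : ℝ} {B : Fin n → Fin n → ℝ} (hB : IsShrink q B) (i : Fin n) :
    B i i ≤ 1 := by
  have h1 : B i i ^ 2 ≤ ∑ j, B i j ^ 2 :=
    Finset.single_le_sum (f := fun j => B i j ^ 2) (fun _ _ => sq_nonneg _) (Finset.mem_univ i)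
  nlinarith [hB.row i, hB.diag_nonneg i]

/-- The factor `t + gᵀ B g` contributed to a regularised Gram determinant by a new row
`g = (√(u i) * x i)`. -/
noncomputable def rowForm {n : ℕ} (t : ℝ) (u : Fin n → ℝ) (B : Fin n → Fin n → ℝ)
    (x : Fin n → ℝ) : ℝ :=
  t + ∑ i, ∑ j, B i j * ((√(u i) * x i) * (√(u j) * x j))

/-- The logarithmic range of a row factor: its mean is at most `t + a² n` while its values are at
least `t`. -/
noncomputable def lossEll (t a : ℝ) (n : ℕ) : ℝ := Real.log ((t + a ^ 2 * n) / t)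

/-- The bound for `log E - E log` of one row factor whose matrix has trace at least `q`. -/
noncomputable def rowLoss (t b a : ℝ) (n q : ℕ) : ℝ :=
  (2 + 4 * lossEll t a n) * ((2 + gaussMoment 4) * (a ^ 4 / b ^ 4) / q)

lemma lossEll_nonneg {t a : ℝ} (ht : 0 < t) (n : ℕ) : 0 ≤ lossEll t a n := by
  apply Real.log_nonneg
  rw [le_div_iff₀ ht]
  nlinarith [mul_nonneg (sq_nonneg a) (Nat.cast_nonneg (α := ℝ) n)]

lemma le_rowForm {n : ℕ} {t q : ℝ} (u : Fin n → ℝ) {B : Fin n → Fin n → ℝ} (hB : IsShrink q B)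
    (x : Fin n → ℝ) : t ≤ rowForm t u B x := by
  have := hB.nonneg (fun i => √(u i) * x i)
  unfold rowForm; linarith

lemma continuous_rowForm {n : ℕ} (t : ℝ) (u : Fin n → ℝ) (B : Fin n → Fin n → ℝ) :
    Continuous (rowForm t u B) := by
  unfold rowForm; fun_prop

lemma rowForm_eq {n : ℕ} (t : ℝ) (u : Fin n → ℝ) (B : Fin n → Fin n → ℝ) :
    rowForm t u B = fun x => t + ∑ i, ∑ j, (B i j * (√(u i) * √(u j))) * (x i * x j) := by
  funext x
  unfold rowForm
  congr 1
  refine Finset.sum_congr rfl fun i _ => Finset.sum_congr rfl fun j _ => ?_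
  ring

lemma integral_rowForm {n : ℕ} (t : ℝ) (u : Fin n → ℝ) (hu : ∀ i, 0 ≤ u i)
    (B : Fin n → Fin n → ℝ) :
    Integrable (rowForm t u B) (rowMeas n) ∧
    ∫ x, rowForm t u B x ∂(rowMeas n) = t + ∑ i, u i * B i i := by
  obtain ⟨h1, h2⟩ := integral_quad (fun i j => B i j * (√(u i) * √(u j)))
  rw [rowForm_eq]
  refine ⟨(integrable_const _).add h1, ?_⟩
  rw [integral_add (integrable_const _) h1, h2]
  simp [Real.mul_self_sqrt (hu _), mul_comm]

lemma integrable_log_of {α : Type*} [MeasurableSpace α] {μ : Measure α} [IsFiniteMeasure μ]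
    {f : α → ℝ} {c : ℝ} (hc : 0 < c) (hf : Integrable f μ) (hcf : ∀ x, c ≤ f x) :
    Integrable (fun x => Real.log (f x)) μ := by
  refine ((integrable_const |Real.log c|).add hf).mono' ?_ ?_
  · exact (Real.measurable_log.comp_aemeasurable hf.aemeasurable).aestronglyMeasurable
  · refine Filter.Eventually.of_forall fun x => ?_
    have h1 := Real.log_le_log hc (hcf x)
    have h2 := Real.log_le_sub_one_of_pos (hc.trans_le (hcf x))
    have h3 := neg_abs_le (Real.log c)
    have h4 := abs_nonneg (Real.log c)
    have h5 := hc.trans_le (hcf x)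
    simp only [Real.norm_eq_abs, Pi.add_apply]
    rw [abs_le]; constructor <;> linarith

/-- Jensen's inequality for the logarithm of a row factor is nearly sharp: the factor has relative
variance `O(1 / q)`. -/
lemma log_rowForm {n q : ℕ} {t b a : ℝ} (ht : 0 < t) (hb : 0 < b) (hq : 0 < q)
    (u : Fin n → ℝ) (hu : ∀ i, u i ∈ Set.Icc (b ^ 2) (a ^ 2))
    {B : Fin n → Fin n → ℝ} (hB : IsShrink q B) :
    Real.log (t + ∑ i, u i * B i i) - rowLoss t b a n q ≤
      ∫ x, Real.log (rowForm t u B x) ∂(rowMeas n) := by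
  have hu0 : ∀ i, 0 ≤ u i := fun i => (sq_nonneg b).trans (hu i).1
  obtain ⟨hI, hE⟩ := integral_rowForm t u hu0 B
  set e := t + ∑ i, u i * B i i with he
  have hsum0 : 0 ≤ ∑ i, u i * B i i :=
    Finset.sum_nonneg fun i _ => mul_nonneg (hu0 i) (hB.diag_nonneg i)
  have he0 : 0 < e := by linarith
  have hq' : (0 : ℝ) < q := by exact_mod_cast hq
  set T := ∑ i, B i i with hT
  have hTq : (q : ℝ) ≤ T := hB.trace
  have hT0 : 0 < T := hq'.trans_le hTq
  have heT : b ^ 2 * T ≤ e := by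
    have : b ^ 2 * T ≤ ∑ i, u i * B i i := by
      rw [hT, Finset.mul_sum]
      exact Finset.sum_le_sum fun i _ => mul_le_mul_of_nonneg_right (hu i).1 (hB.diag_nonneg i)
    linarith
  have hele : e ≤ t + a ^ 2 * n := by
    have : ∑ i, u i * B i i ≤ ∑ i : Fin n, a ^ 2 := Finset.sum_le_sum fun i _ => by
      nlinarith [(hu i).2, hB.diag_le i, hB.diag_nonneg i, hu0 i, sq_nonneg a]
    simp at this
    nlinarith
  set Q : (Fin n → ℝ) → ℝ := fun x => ∑ i, ∑ j, (B i j * (√(u i) * √(u j))) * (x i * x j) with hQ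
  have hfQ : ∀ x, rowForm t u B x = t + Q x := fun x => by rw [rowForm_eq]
  obtain ⟨hS, hV⟩ := integral_quad_sq (fun i j => B i j * (√(u i) * √(u j)))
    (fun i j => by rw [hB.symm i j]; ring)
  obtain ⟨hQI, hQE⟩ := integral_quad (fun i j => B i j * (√(u i) * √(u j)))
  have hdiag : ∑ i, B i i * (√(u i) * √(u i)) = e - t := by
    simp [he, Real.mul_self_sqrt (hu0 _), mul_comm]
  simp only [hdiag] at hV hQE
  have hFrob : ∑ i, ∑ j, (B i j * (√(u i) * √(u j))) ^ 2 ≤ a ^ 4 * T := by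
    rw [hT, Finset.mul_sum]
    refine Finset.sum_le_sum fun i _ => ?_
    calc ∑ j, (B i j * (√(u i) * √(u j))) ^ 2 ≤ ∑ j, a ^ 4 * B i j ^ 2 := by
          refine Finset.sum_le_sum fun j _ => ?_
          rw [mul_pow, mul_pow, Real.sq_sqrt (hu0 i), Real.sq_sqrt (hu0 j), mul_comm]
          refine mul_le_mul_of_nonneg_right ?_ (sq_nonneg _)
          calc u i * u j ≤ a ^ 2 * a ^ 2 :=
                mul_le_mul (hu i).2 (hu j).2 (hu0 j) (sq_nonneg a)
            _ = a ^ 4 := by ring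
      _ = a ^ 4 * ∑ j, B i j ^ 2 := by rw [Finset.mul_sum]
      _ ≤ a ^ 4 * B i i := mul_le_mul_of_nonneg_left (hB.row i) (by positivity)
  set l := lossEll t a n with hl
  have hl0 : 0 ≤ l := lossEll_nonneg ht n
  -- `l` bounds `-log (rowForm / e)` because `rowForm ≥ t` and `e ≤ t + a² n`.
  have hpt : ∀ x, -Real.log (rowForm t u B x / e) ≤
      (1 - rowForm t u B x / e) + (2 + 4 * l) * (1 - rowForm t u B x / e) ^ 2 := by
    intro x
    have h1 := le_rowForm (t := t) u hB x
    refine neg_log_le (div_pos (ht.trans_le h1) he0) ?_ hl0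
    rw [← Real.log_inv, hl, lossEll, inv_div]
    refine Real.log_le_log (div_pos he0 (ht.trans_le h1)) ?_
    exact div_le_div₀ (he0.le.trans hele) hele ht h1
  have hlogI : Integrable (fun x => Real.log (rowForm t u B x)) (rowMeas n) :=
    integrable_log_of ht hI (le_rowForm u hB)
  have hpt2 : ∀ x, Real.log e - Real.log (rowForm t u B x) ≤
      (1 - rowForm t u B x / e) + (2 + 4 * l) *
        ((Q x ^ 2 - 2 * (e - t) * Q x + (e - t) ^ 2) / e ^ 2) := by
    intro x
    have h1 := hpt x
    have h2 := (ht.trans_le (le_rowForm (t := t) u hB x))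
    rw [Real.log_div h2.ne' he0.ne'] at h1
    have h3 : (1 - rowForm t u B x / e) ^ 2 =
        (Q x ^ 2 - 2 * (e - t) * Q x + (e - t) ^ 2) / e ^ 2 := by
      rw [hfQ]; field_simp; ring
    rw [h3] at h1
    linarith
  have hA : Integrable (fun x => Q x ^ 2 - 2 * (e - t) * Q x) (rowMeas n) :=
    hS.sub (hQI.const_mul _)
  have hSI : Integrable (fun x => (Q x ^ 2 - 2 * (e - t) * Q x + (e - t) ^ 2) / e ^ 2)
      (rowMeas n) :=
    (hA.add (integrable_const _)).div_const _
  have hDI : Integrable (fun x => 1 - rowForm t u B x / e) (rowMeas n) :=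
    (integrable_const _).sub (hI.div_const _)
  have hint := integral_mono ((integrable_const (Real.log e)).sub hlogI)
    (hDI.add (hSI.const_mul (2 + 4 * l))) hpt2
  simp only [Pi.add_apply, Pi.sub_apply] at hint
  rw [integral_sub (integrable_const _) hlogI,
    integral_add hDI (hSI.const_mul (2 + 4 * l)), integral_const_mul, integral_div,
    integral_add hA (integrable_const _),
    integral_sub hS (hQI.const_mul _), integral_const_mul,
    integral_sub (integrable_const _) (hI.div_const _), integral_div, hE] at hint
  simp only [hQE] at hint
  simp only [integral_const, probReal_univ, smul_eq_mul, one_mul, div_self he0.ne'] at hint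
  have hvar : (∫ x, (∑ i, ∑ j, (B i j * (√(u i) * √(u j))) * (x i * x j)) ^ 2 ∂(rowMeas n) -
      2 * (e - t) * (e - t) + (e - t) ^ 2) / e ^ 2 ≤
      (2 + gaussMoment 4) * (a ^ 4 / b ^ 4) / q := by
    have hg := gaussMoment_four_nonneg
    calc _ ≤ ((2 + gaussMoment 4) * (a ^ 4 * T)) / e ^ 2 := by
          gcongr
          nlinarith [mul_le_mul_of_nonneg_left hFrob (show 0 ≤ 2 + gaussMoment 4 by linarith)]
      _ ≤ ((2 + gaussMoment 4) * (a ^ 4 * T)) / (b ^ 2 * T) ^ 2 := by gcongr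
      _ = (2 + gaussMoment 4) * (a ^ 4 / b ^ 4) / T := by field_simp
      _ ≤ _ := by gcongr
  have := mul_le_mul_of_nonneg_left hvar (show 0 ≤ 2 + 4 * l by linarith)
  unfold rowLoss
  linarith

/-! ### Regularised Gram matrices -/

section LinearAlgebra

variable {k n : ℕ}

/-- The regularised Gram matrix `t I + H Hᵀ`. -/
noncomputable def regGram (t : ℝ) (H : Matrix (Fin k) (Fin n) ℝ) : Matrix (Fin k) (Fin k) ℝ :=
  t • (1 : Matrix (Fin k) (Fin k) ℝ) + H * Hᵀ

/-- The regularised projection `P - Hᵀ (t I + H Hᵀ)⁻¹ H` onto the complement of the row space of `H`,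
where `P` is the coordinate projection killing the columns in `J`. -/
noncomputable def resid (t : ℝ) (J : Finset (Fin n)) (H : Matrix (Fin k) (Fin n) ℝ) :
    Matrix (Fin n) (Fin n) ℝ :=
  Matrix.diagonal (fun j => if j ∈ J then 0 else 1) - Hᵀ * (regGram t H)⁻¹ * H

lemma regGram_posDef {t : ℝ} (ht : 0 < t) (H : Matrix (Fin k) (Fin n) ℝ) :
    (regGram t H).PosDef := by
  unfold regGram
  have h1 : (t • (1 : Matrix (Fin k) (Fin k) ℝ)).PosDef := Matrix.PosDef.one.smul ht
  have h2 : (H * Hᵀ).PosSemidef := by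
    simpa using Matrix.posSemidef_self_mul_conjTranspose H
  exact h1.add_posSemidef h2

lemma regGram_symm (t : ℝ) (H : Matrix (Fin k) (Fin n) ℝ) : (regGram t H)ᵀ = regGram t H := by
  simp [regGram, Matrix.transpose_mul]

lemma regGram_inv_symm (t : ℝ) (H : Matrix (Fin k) (Fin n) ℝ) :
    ((regGram t H)⁻¹)ᵀ = (regGram t H)⁻¹ := by
  rw [Matrix.transpose_nonsing_inv, regGram_symm]

lemma resid_symm (t : ℝ) (J : Finset (Fin n)) (H : Matrix (Fin k) (Fin n) ℝ) :
    (resid t J H)ᵀ = resid t J H := by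
  simp [resid, Matrix.transpose_mul, regGram_inv_symm, Matrix.mul_assoc]

/-- For `H` supported off `J`, the residual satisfies `B² + t LᵀL = B` with `L = (t I + H Hᵀ)⁻¹ H`;
this gives both `B ≥ 0` and `B² ≤ B`. -/
lemma resid_sq {t : ℝ} (ht : 0 < t) (J : Finset (Fin n)) (H : Matrix (Fin k) (Fin n) ℝ)
    (hJ : ∀ i, ∀ j ∈ J, H i j = 0) :
    resid t J H * resid t J H +
      t • (((regGram t H)⁻¹ * H)ᵀ * ((regGram t H)⁻¹ * H)) = resid t J H := by
  have hdet : IsUnit (regGram t H).det := (regGram_posDef ht H).det_pos.ne'.isUnit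
  set S := regGram t H with hS
  set P : Matrix (Fin n) (Fin n) ℝ := Matrix.diagonal (fun j => if j ∈ J then 0 else 1) with hP
  have hHP : H * P = H := by
    ext i j
    rw [hP, Matrix.mul_diagonal]
    split_ifs with h
    · simp [hJ i j h]
    · simp
  have hPH : P * Hᵀ = Hᵀ := by
    have := congrArg Matrix.transpose hHP
    simpa [Matrix.transpose_mul, hP] using this
  have hPP : P * P = P := by
    rw [hP, Matrix.diagonal_mul_diagonal]; congr 1; ext j; split_ifs <;> simp
  have hHH : H * Hᵀ = S - t • 1 := by rw [hS, regGram]; abel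
  have hinv : S⁻¹ * S = 1 := Matrix.nonsing_inv_mul _ hdet
  have hST : (S⁻¹)ᵀ = S⁻¹ := regGram_inv_symm t H
  have e : Hᵀ * S⁻¹ * H * (Hᵀ * S⁻¹ * H) = Hᵀ * S⁻¹ * H - t • (Hᵀ * S⁻¹ * (S⁻¹ * H)) := by
    calc Hᵀ * S⁻¹ * H * (Hᵀ * S⁻¹ * H) = Hᵀ * (S⁻¹ * (H * Hᵀ) * (S⁻¹ * H)) := by
          simp only [Matrix.mul_assoc]
      _ = _ := by
          rw [hHH, Matrix.mul_sub, hinv, Matrix.mul_smul, Matrix.mul_one, Matrix.sub_mul,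
            Matrix.one_mul, Matrix.mul_sub, Matrix.smul_mul, Matrix.mul_smul]
          simp only [Matrix.mul_assoc]
  have e2 : P * (Hᵀ * S⁻¹ * H) = Hᵀ * S⁻¹ * H := by
    rw [← Matrix.mul_assoc, ← Matrix.mul_assoc, hPH]
  have e3 : Hᵀ * S⁻¹ * H * P = Hᵀ * S⁻¹ * H := by
    rw [Matrix.mul_assoc, hHP]
  rw [resid, ← hS, ← hP, Matrix.sub_mul, Matrix.mul_sub, Matrix.mul_sub, hPP, e, e2, e3,
    Matrix.transpose_mul, hST]
  abel

/-- Each of the `k` rows of `H` and each column in `J` costs at most one unit of trace. -/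
lemma resid_isShrink {t : ℝ} (ht : 0 < t) (J : Finset (Fin n)) (H : Matrix (Fin k) (Fin n) ℝ)
    (hJ : ∀ i, ∀ j ∈ J, H i j = 0) : IsShrink ((n : ℝ) - J.card - k) (resid t J H) := by
  have hsq := resid_sq ht J H hJ
  set B := resid t J H with hB
  set L := (regGram t H)⁻¹ * H with hL
  have hBT : Bᵀ = B := resid_symm t J H
  have hsymm : ∀ i j, B i j = B j i := fun i j => congrFun (congrFun hBT.symm i) j
  refine ⟨hsymm, fun x => ?_, fun i => ?_, ?_⟩
  · have h1 : ∑ i, ∑ j, B i j * (x i * x j) = x ⬝ᵥ (B *ᵥ x) := by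
      simp only [dotProduct, Matrix.mulVec, Finset.mul_sum]
      refine Finset.sum_congr rfl fun i _ => Finset.sum_congr rfl fun j _ => by ring
    have h2 : x ⬝ᵥ (B *ᵥ x) = (B *ᵥ x) ⬝ᵥ (B *ᵥ x) + t * ((L *ᵥ x) ⬝ᵥ (L *ᵥ x)) := by
      conv_lhs => rw [← hsq]
      rw [Matrix.add_mulVec, dotProduct_add, Matrix.smul_mulVec, dotProduct_smul,
        ← Matrix.mulVec_mulVec, ← Matrix.mulVec_mulVec, Matrix.dotProduct_mulVec x Lᵀ,
        Matrix.vecMul_transpose, Matrix.dotProduct_mulVec x B, ← Matrix.mulVec_transpose, hBT]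
      rfl
    rw [h1, h2]
    exact add_nonneg (Finset.sum_nonneg fun _ _ => mul_self_nonneg _)
      (mul_nonneg ht.le (Finset.sum_nonneg fun _ _ => mul_self_nonneg _))
  · have h1 := congrFun (congrFun hsq i) i
    rw [Matrix.add_apply, Matrix.smul_apply, Matrix.mul_apply, Matrix.mul_apply] at h1
    have h2 : 0 ≤ t • ∑ j, Lᵀ i j * L j i := by
      refine mul_nonneg ht.le (Finset.sum_nonneg fun j _ => ?_)
      rw [Matrix.transpose_apply]; exact mul_self_nonneg _
    have h3 : ∑ j, B i j ^ 2 = ∑ j, B i j * B j i :=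
      Finset.sum_congr rfl fun j _ => by rw [← hsymm i j, sq]
    linarith
  · have hdet : IsUnit (regGram t H).det := (regGram_posDef ht H).det_pos.ne'.isUnit
    have h1 : ∑ i, B i i = B.trace := rfl
    have hHH : H * Hᵀ = regGram t H - t • 1 := by rw [regGram]; abel
    have h2 : (Hᵀ * (regGram t H)⁻¹ * H).trace = k - t * ((regGram t H)⁻¹).trace := by
      rw [Matrix.mul_assoc, Matrix.trace_mul_comm, Matrix.mul_assoc, hHH, Matrix.mul_sub,
        Matrix.nonsing_inv_mul _ hdet]
      simp [Matrix.trace_sub]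
    have h3 : 0 ≤ ((regGram t H)⁻¹).trace := (regGram_posDef ht H).inv.posSemidef.trace_nonneg
    have h4 : (Matrix.diagonal (fun j : Fin n => if j ∈ J then (0:ℝ) else 1)).trace
        = n - J.card := by
      rw [Matrix.trace_diagonal]
      have : ∑ j : Fin n, (if j ∈ J then (0:ℝ) else 1) = ∑ j : Fin n, (1 - if j ∈ J then 1 else 0) :=
        Finset.sum_congr rfl fun j _ => by split_ifs <;> simp
      rw [this, Finset.sum_sub_distrib]; simp
    rw [h1, hB, resid, Matrix.trace_sub, h2, h4]
    nlinarith [mul_nonneg ht.le h3]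

/-- Adding a row on top multiplies the regularised Gram determinant by a quadratic expression in that
row, the Schur complement. -/
lemma det_regGram_succ {t : ℝ} (ht : 0 < t) (J : Finset (Fin n))
    (H : Matrix (Fin (k + 1)) (Fin n) ℝ) (hJ : ∀ i, ∀ j ∈ J, H i j = 0) :
    (regGram t H).det = (regGram t (H.submatrix Fin.succ id)).det *
      (t + ∑ i, ∑ j, resid t J (H.submatrix Fin.succ id) i j * (H 0 i * H 0 j)) := by
  set H' := H.submatrix Fin.succ id with hH'
  have hdet : IsUnit (regGram t H').det := (regGram_posDef ht H').det_pos.ne'.isUnit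
  let e : Fin k ⊕ PUnit.{1} ≃ Fin (k + 1) :=
    ((finSuccEquiv k).trans (Equiv.optionEquivSumPUnit.{0} (Fin k))).symm
  have el : ∀ i, e (Sum.inl i) = i.succ := fun i => by simp [e]
  have er : ∀ u, e (Sum.inr u) = 0 := fun u => by simp [e]
  have hblock : (regGram t H).submatrix e e = Matrix.fromBlocks (regGram t H')
      (Matrix.of fun i _ => (H' *ᵥ H 0) i) (Matrix.of fun _ i => (H' *ᵥ H 0) i)
      (Matrix.of fun _ _ => t + H 0 ⬝ᵥ H 0) := by
    ext i j
    rcases i with i | i <;> rcases j with j | j <;>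
      simp [el, er, regGram, hH', Matrix.mul_apply, Matrix.mulVec, dotProduct, Matrix.one_apply,
        mul_comm]
    exact fun h => absurd h.symm (Fin.succ_ne_zero j)
  let _ := Matrix.invertibleOfIsUnitDet _ hdet
  rw [← Matrix.det_submatrix_equiv_self e, hblock, Matrix.det_fromBlocks₁₁,
    Matrix.invOf_eq_nonsing_inv]
  congr 1
  have h1 : ∑ i, ∑ j, resid t J H' i j * (H 0 i * H 0 j) = H 0 ⬝ᵥ (resid t J H' *ᵥ H 0) := by
    simp only [dotProduct, Matrix.mulVec, Finset.mul_sum]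
    refine Finset.sum_congr rfl fun i _ => Finset.sum_congr rfl fun j _ => by ring
  have h2 : Matrix.diagonal (fun j => if j ∈ J then (0:ℝ) else 1) *ᵥ H 0 = H 0 := by
    ext j
    rw [Matrix.mulVec_diagonal]
    split_ifs with h
    · simp [hJ 0 j h]
    · simp
  rw [h1, resid, Matrix.sub_mulVec, h2, dotProduct_sub, ← Matrix.mulVec_mulVec,
    ← Matrix.mulVec_mulVec, Matrix.dotProduct_mulVec (H 0) H'ᵀ, Matrix.vecMul_transpose]
  rw [Matrix.det_unique (n := PUnit.{1}), Matrix.sub_apply, Matrix.mul_assoc, Matrix.mul_apply]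
  simp only [Matrix.of_apply, Matrix.mul_apply]
  rw [add_sub_assoc]
  rfl

/-- Deleting column `j` multiplies the regularised Gram determinant by the `j`-th diagonal entry of
the residual (matrix determinant lemma). -/
lemma det_regGram_del {t : ℝ} (ht : 0 < t) (J : Finset (Fin n)) (j : Fin n) (hj : j ∉ J)
    (H : Matrix (Fin k) (Fin n) ℝ) :
    (regGram t (Matrix.of fun i l => if l = j then 0 else H i l)).det =
      (regGram t H).det * resid t J H j j := by
  have hdet : IsUnit (regGram t H).det := (regGram_posDef ht H).det_pos.ne'.isUnit
  have h1 : regGram t (Matrix.of fun i l => if l = j then 0 else H i l) =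
      regGram t H + Matrix.replicateCol Unit (fun i => - H i j) *
        Matrix.replicateRow Unit (fun i => H i j) := by
    ext i i'
    simp only [regGram, Matrix.add_apply, Matrix.mul_apply, Matrix.transpose_apply,
      Matrix.of_apply]
    rw [add_assoc]
    congr 1
    simp only [Matrix.replicateCol_apply, Matrix.replicateRow_apply, Finset.univ_unique,
      Finset.sum_singleton]
    rw [← Finset.add_sum_erase _ _ (Finset.mem_univ j),
      ← Finset.add_sum_erase _ (fun l => H i l * H i' l) (Finset.mem_univ j)]
    rw [Finset.sum_congr rfl (g := fun l => H i l * H i' l)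
      (fun l hl => by simp [Finset.ne_of_mem_erase hl])]
    simp [sub_eq_add_neg]
  rw [h1, Matrix.det_add_replicateCol_mul_replicateRow hdet]
  congr 1
  rw [Matrix.det_unique, resid]
  simp [hj, Matrix.mul_apply]
  rfl

end LinearAlgebra

/-! ### Row-by-row structure of the determinant -/

/-- The law of a `k × n` matrix of independent standard Gaussians, as a product over rows. -/
noncomputable def matMeas (k n : ℕ) : Measure (Fin k → Fin n → ℝ) :=
  Measure.pi fun _ => rowMeas n

instance (k n : ℕ) : IsProbabilityMeasure (matMeas k n) := by
  unfold matMeas; infer_instance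

lemma measurePreserving_cons (k n : ℕ) :
    MeasurePreserving (fun p : (Fin n → ℝ) × (Fin k → Fin n → ℝ) =>
      (Fin.cons p.1 p.2 : Fin (k + 1) → Fin n → ℝ))
      ((rowMeas n).prod (matMeas k n)) (matMeas (k + 1) n) := by
  have h := (measurePreserving_piFinSuccAbove
    (fun _ : Fin (k + 1) => rowMeas n) 0).symm
  have e : (fun p : (Fin n → ℝ) × (Fin k → Fin n → ℝ) =>
      (Fin.cons p.1 p.2 : Fin (k + 1) → Fin n → ℝ)) =
      (MeasurableEquiv.piFinSuccAbove (fun _ : Fin (k + 1) => Fin n → ℝ) 0).symm := by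
    funext p
    simp [MeasurableEquiv.piFinSuccAbove, Fin.insertNthEquiv]
  rw [e]
  exact h

/-- Integration over a Gaussian matrix as integration over the top row followed by the other rows. -/
lemma fubini_cons {k n : ℕ} {f : (Fin (k + 1) → Fin n → ℝ) → ℝ}
    (hf : Integrable f (matMeas (k + 1) n)) :
    Integrable (fun y => ∫ x, f (Fin.cons x y) ∂(rowMeas n)) (matMeas k n) ∧
    ∫ G, f G ∂(matMeas (k + 1) n) = ∫ y, ∫ x, f (Fin.cons x y) ∂(rowMeas n) ∂(matMeas k n) := by
  have hmp := measurePreserving_cons k n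
  have hf' := hmp.integrable_comp_of_integrable hf
  refine ⟨hf'.integral_prod_right, ?_⟩
  rw [← hmp.map_eq, integral_map hmp.measurable.aemeasurable (by rw [hmp.map_eq]; exact hf.1)]
  exact integral_prod_symm _ hf'

lemma integrable_cons {k n : ℕ} {f : (Fin (k + 1) → Fin n → ℝ) → ℝ} (hc : Continuous f)
    (h0 : ∀ G, 0 ≤ f G)
    (h1 : ∀ y, Integrable (fun x => f (Fin.cons x y)) (rowMeas n))
    (h2 : Integrable (fun y => ∫ x, f (Fin.cons x y) ∂(rowMeas n)) (matMeas k n)) :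
    Integrable f (matMeas (k + 1) n) := by
  have hmp := measurePreserving_cons k n
  rw [← hmp.map_eq, integrable_map_measure hc.aestronglyMeasurable hmp.measurable.aemeasurable,
    integrable_prod_iff']
  · refine ⟨Filter.Eventually.of_forall h1, ?_⟩
    refine h2.congr (Filter.Eventually.of_forall fun y => ?_)
    refine integral_congr_ae (Filter.Eventually.of_forall fun x => ?_)
    simp [abs_of_nonneg (h0 _)]
  · exact (hc.measurable.comp hmp.measurable).aestronglyMeasurable

section Rows

variable {k n : ℕ}

/-- The Gaussian matrix `(√(w i j) * G i j)` with the columns in `J` set to zero. -/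
noncomputable def maskMat (w : Fin k → Fin n → ℝ) (J : Finset (Fin n)) (G : Fin k → Fin n → ℝ) :
    Matrix (Fin k) (Fin n) ℝ :=
  Matrix.of fun i j => if j ∈ J then 0 else √(w i j) * G i j

/-- The regularised Gram determinant of the weighted Gaussian matrix without the columns in `J`. -/
noncomputable def detMask (t : ℝ) (w : Fin k → Fin n → ℝ) (J : Finset (Fin n))
    (G : Fin k → Fin n → ℝ) : ℝ :=
  (regGram t (maskMat w J G)).det

/-- The generating function of the matchings between `k` weighted rows and the columns outside `J`,
an unmatched row having weight `t`; it is defined by recursion on what row `0` is matched to. See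
`matchGen_eq_sum` for the explicit sum. -/
noncomputable def matchGen (t : ℝ) : ∀ {k : ℕ}, (Fin k → Fin n → ℝ) → Finset (Fin n) → ℝ
  | 0, _, _ => 1
  | _ + 1, w, J => t * matchGen t (fun i => w i.succ) J +
      ∑ j, if j ∈ J then 0 else w 0 j * matchGen t (fun i => w i.succ) (insert j J)

lemma maskMat_zero (w : Fin k → Fin n → ℝ) (J : Finset (Fin n)) (G : Fin k → Fin n → ℝ) :
    ∀ i, ∀ j ∈ J, maskMat w J G i j = 0 := fun i j hj => by simp [maskMat, hj]

lemma continuous_detMask (t : ℝ) (w : Fin k → Fin n → ℝ) (J : Finset (Fin n)) :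
    Continuous (detMask t w J) := by
  unfold detMask regGram
  refine Continuous.matrix_det ?_
  have : Continuous (maskMat w J) := by
    refine continuous_matrix fun i j => ?_
    simp only [maskMat, Matrix.of_apply]
    split_ifs <;> fun_prop
  fun_prop

lemma detMask_pos {t : ℝ} (ht : 0 < t) (w : Fin k → Fin n → ℝ) (J : Finset (Fin n))
    (G : Fin k → Fin n → ℝ) : 0 < detMask t w J G :=
  (regGram_posDef ht _).det_pos

/-- The residual that governs the row factor of the next row, see `detMask_cons`. -/
noncomputable def rowResid (t : ℝ) (w : Fin k → Fin n → ℝ) (J : Finset (Fin n))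
    (G : Fin k → Fin n → ℝ) : Fin n → Fin n → ℝ := resid t J (maskMat w J G)

lemma rowResid_isShrink {t : ℝ} (ht : 0 < t) (w : Fin k → Fin n → ℝ) (J : Finset (Fin n))
    (G : Fin k → Fin n → ℝ) : IsShrink ((n : ℝ) - J.card - k) (rowResid t w J G) :=
  resid_isShrink ht J _ (maskMat_zero w J G)

lemma rowResid_zero {t : ℝ} (w : Fin k → Fin n → ℝ) (J : Finset (Fin n))
    (G : Fin k → Fin n → ℝ) {i : Fin n} (hi : i ∈ J) (j : Fin n) : rowResid t w J G i j = 0 := by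
  unfold rowResid resid
  rw [Matrix.sub_apply, Matrix.mul_assoc, Matrix.mul_apply]
  simp only [Matrix.transpose_apply, maskMat_zero w J G _ i hi, zero_mul, Finset.sum_const_zero,
    sub_zero]
  rw [Matrix.diagonal_apply]
  simp [hi]

/-- The determinant as a product of the determinant of the lower rows and the factor of the top row. -/
lemma detMask_cons {t : ℝ} (ht : 0 < t) (w : Fin (k + 1) → Fin n → ℝ) (J : Finset (Fin n))
    (x : Fin n → ℝ) (y : Fin k → Fin n → ℝ) :
    detMask t w J (Fin.cons x y) = detMask t (fun i => w i.succ) J y *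
      rowForm t (w 0) (rowResid t (fun i => w i.succ) J y) x := by
  have hsub : (maskMat w J (Fin.cons x y)).submatrix Fin.succ id =
      maskMat (fun i => w i.succ) J y := by
    ext i j; simp [maskMat]
  unfold detMask
  rw [det_regGram_succ ht J _ (maskMat_zero w J _), hsub, rowForm]
  congr 2
  refine Finset.sum_congr rfl fun i _ => Finset.sum_congr rfl fun j _ => ?_
  by_cases hi : i ∈ J
  · have := rowResid_zero (t := t) (fun i => w i.succ) J y hi j
    rw [this]; rw [rowResid] at this; rw [this]; simp
  by_cases hj : j ∈ J
  · have := rowResid_zero (t := t) (fun i => w i.succ) J y hj i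
    rw [(rowResid_isShrink ht _ J y).symm] at this
    rw [this]; rw [rowResid] at this; rw [this]; simp
  · simp [rowResid, maskMat, hi, hj]

lemma detMask_insert {t : ℝ} (ht : 0 < t) (w : Fin k → Fin n → ℝ) (J : Finset (Fin n))
    {j : Fin n} (hj : j ∉ J) (G : Fin k → Fin n → ℝ) :
    detMask t w (insert j J) G = detMask t w J G * rowResid t w J G j j := by
  unfold detMask rowResid
  rw [← det_regGram_del ht J j hj]
  congr 2
  ext i l
  by_cases h : l = j <;> simp [maskMat, h]

/-- Averaging out a top row with weights `u` turns the determinant into a nonnegative combination of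
determinants with at most one more deleted column; this is the recursion of `matchGen`. -/
lemma detMask_mean {t : ℝ} (ht : 0 < t) (w : Fin k → Fin n → ℝ) (J : Finset (Fin n))
    (u : Fin n → ℝ) (G : Fin k → Fin n → ℝ) :
    detMask t w J G * (t + ∑ j, u j * rowResid t w J G j j) =
      t * detMask t w J G + ∑ j, if j ∈ J then 0 else u j * detMask t w (insert j J) G := by
  rw [mul_add, Finset.mul_sum, mul_comm t]
  congr 1
  refine Finset.sum_congr rfl fun j _ => ?_
  split_ifs with h
  · rw [rowResid_zero w J G h]; simp
  · rw [detMask_insert ht w J h]; ring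

lemma pow_le_detMask {t : ℝ} (ht : 0 < t) : ∀ {k : ℕ} (w : Fin k → Fin n → ℝ)
    (J : Finset (Fin n)) (G : Fin k → Fin n → ℝ), t ^ k ≤ detMask t w J G
  | 0, w, J, G => by simp [detMask]
  | k + 1, w, J, G => by
    have h := detMask_cons ht w J (G 0) (Fin.tail G)
    rw [Fin.cons_self_tail] at h
    rw [h, pow_succ]
    exact mul_le_mul (pow_le_detMask ht _ _ _) (le_rowForm _ (rowResid_isShrink ht _ _ _) _) ht.le
      (detMask_pos ht _ _ _).le

lemma matchGen_pos {t : ℝ} (ht : 0 < t) : ∀ {k : ℕ} (w : Fin k → Fin n → ℝ)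
    (_ : ∀ i j, 0 ≤ w i j) (J : Finset (Fin n)), 0 < matchGen t w J
  | 0, w, _, J => by simp [matchGen]
  | k + 1, w, hw, J => by
    rw [matchGen]
    refine add_pos_of_pos_of_nonneg (mul_pos ht (matchGen_pos ht _ (fun i => hw i.succ) J))
      (Finset.sum_nonneg fun j _ => ?_)
    split_ifs
    · exact le_rfl
    · exact mul_nonneg (hw 0 j) (matchGen_pos ht _ (fun i => hw i.succ) _).le

/-- The expected regularised Gram determinant is the matching generating function. -/
lemma integral_detMask {t : ℝ} (ht : 0 < t) : ∀ {k : ℕ} (w : Fin k → Fin n → ℝ)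
    (_ : ∀ i j, 0 ≤ w i j) (J : Finset (Fin n)),
    Integrable (detMask t w J) (matMeas k n) ∧ ∫ G, detMask t w J G ∂(matMeas k n) = matchGen t w J
  | 0, w, _, J => by
    have : detMask t w J = fun _ => 1 := by funext G; simp [detMask]
    rw [this]
    exact ⟨integrable_const _, by simp [matchGen]⟩
  | k + 1, w, hw, J => by
    have ih := integral_detMask ht (fun i => w i.succ) (fun i => hw i.succ)
    have hrow := fun y => integral_rowForm t (w 0) (hw 0) (rowResid t (fun i => w i.succ) J y)
    have hin : ∀ y, ∫ x, detMask t w J (Fin.cons x y) ∂(rowMeas n) =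
        t * detMask t (fun i => w i.succ) J y +
          ∑ j, if j ∈ J then 0 else w 0 j * detMask t (fun i => w i.succ) (insert j J) y := by
      intro y
      simp only [detMask_cons ht]
      rw [integral_const_mul, (hrow y).2, detMask_mean ht]
    have hterm : ∀ j, Integrable (fun y => if j ∈ J then 0 else
        w 0 j * detMask t (fun i => w i.succ) (insert j J) y) (matMeas k n) := by
      intro j
      split_ifs
      · exact integrable_zero _ _ _
      · exact (ih _).1.const_mul _
    have hint : Integrable (detMask t w J) (matMeas (k + 1) n) := by
      refine integrable_cons (continuous_detMask t w J) (fun G => (detMask_pos ht w J G).le) ?_ ?_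
      · intro y
        simp only [detMask_cons ht]
        exact (hrow y).1.const_mul _
      · simp only [hin]
        exact ((ih J).1.const_mul t).add (integrable_finsetSum _ fun j _ => hterm j)
    refine ⟨hint, ?_⟩
    rw [(fubini_cons hint).2]
    simp only [hin]
    rw [integral_add ((ih J).1.const_mul t) (integrable_finsetSum _ fun j _ => hterm j),
      integral_const_mul, (ih J).2, integral_finsetSum _ fun j _ => hterm j, matchGen]
    congr 1
    refine Finset.sum_congr rfl fun j _ => ?_
    split_ifs
    · simp
    · rw [integral_const_mul, (ih _).2]

end Rows

/-! ### Mixtures over deleted column sets -/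

section Mixture

variable {k n : ℕ}

lemma IsShrink.mono {q q' : ℝ} (h : q' ≤ q) {B : Fin n → Fin n → ℝ} (hB : IsShrink q B) :
    IsShrink q' B := ⟨hB.symm, hB.nonneg, hB.row, h.trans hB.trace⟩

lemma IsShrink.mix {ι : Type} [Fintype ι] {q : ℝ} (p : ι → ℝ) (hp : ∀ a, 0 ≤ p a)
    (hp1 : ∑ a, p a = 1) (B : ι → Fin n → Fin n → ℝ) (hB : ∀ a, IsShrink q (B a)) :
    IsShrink q (fun i j => ∑ a, p a * B a i j) := by
  refine ⟨fun i j => ?_, fun x => ?_, fun i => ?_, ?_⟩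
  · exact Finset.sum_congr rfl fun a _ => by rw [(hB a).symm]
  · have : ∑ i, ∑ j, (∑ a, p a * B a i j) * (x i * x j) =
        ∑ a, p a * ∑ i, ∑ j, B a i j * (x i * x j) := by
      simp only [Finset.sum_mul, Finset.mul_sum]
      conv_rhs => rw [Finset.sum_comm]
      refine Finset.sum_congr rfl fun i _ => ?_
      conv_rhs => rw [Finset.sum_comm]
      refine Finset.sum_congr rfl fun j _ => Finset.sum_congr rfl fun a _ => by ring
    rw [this]
    exact Finset.sum_nonneg fun a _ => mul_nonneg (hp a) ((hB a).nonneg x)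
  · calc ∑ j, (∑ a, p a * B a i j) ^ 2 ≤ ∑ j, ∑ a, p a * B a i j ^ 2 := by
          refine Finset.sum_le_sum fun j _ => ?_
          have := (even_two.convexOn_pow (𝕜 := ℝ)).map_sum_le (t := Finset.univ) (w := p)
            (p := fun a => B a i j) (fun a _ => hp a) hp1 (fun a _ => Set.mem_univ _)
          simpa using this
      _ = ∑ a, p a * ∑ j, B a i j ^ 2 := by
          rw [Finset.sum_comm]; simp only [Finset.mul_sum]
      _ ≤ ∑ a, p a * B a i i :=
          Finset.sum_le_sum fun a _ => mul_le_mul_of_nonneg_left ((hB a).row i) (hp a)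
  · rw [Finset.sum_comm]
    calc q = ∑ a, p a * q := by rw [← Finset.sum_mul, hp1, one_mul]
      _ ≤ _ := Finset.sum_le_sum fun a _ => by
          rw [← Finset.mul_sum]
          exact mul_le_mul_of_nonneg_left (hB a).trace (hp a)

/-- A nonnegative combination of row factors is a multiple of a single row factor, with the
corresponding convex combination of matrices. -/
lemma sum_rowForm {ι : Type} [Fintype ι] (t : ℝ) (u : Fin n → ℝ) (d : ι → ℝ) (hd : 0 < ∑ a, d a)
    (B : ι → Fin n → Fin n → ℝ) (x : Fin n → ℝ) :
    ∑ a, d a * rowForm t u (B a) x = (∑ a, d a) *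
      rowForm t u (fun i j => ∑ a, d a / (∑ a', d a') * B a i j) x := by
  have e : ∀ i j, (∑ a, d a) * (∑ a, d a / (∑ a', d a') * B a i j) = ∑ a, d a * B a i j := by
    intro i j
    rw [Finset.mul_sum]
    refine Finset.sum_congr rfl fun a _ => ?_
    field_simp
  unfold rowForm
  have e2 : ∀ z : Fin n → Fin n → ℝ, (∑ a, d a) * ∑ i, ∑ j,
      (∑ a, d a / (∑ a', d a') * B a i j) * z i j = ∑ a, d a * ∑ i, ∑ j, B a i j * z i j := by
    intro z
    simp only [Finset.mul_sum (Finset.univ : Finset (Fin n))]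
    simp only [← mul_assoc, e]
    simp only [Finset.sum_mul]
    conv_rhs => rw [Finset.sum_comm]
    refine Finset.sum_congr rfl fun i _ => ?_
    rw [Finset.sum_comm]
  rw [mul_add, e2]
  simp only [mul_add, Finset.sum_add_distrib, Finset.sum_mul]

/-- The sets of deleted columns that occur after averaging out one more row: `none` means that the row
is unmatched, `some j` that it uses column `j`. -/
def nextSet {ι : Type} (J : ι → Finset (Fin n)) : ι × Option (Fin n) → Finset (Fin n)
  | (a, none) => J a
  | (a, some j) => insert j (J a)

/-- The coefficients of the mixture obtained after averaging out one more row with weights `u`; they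
vanish on columns that are already deleted. -/
noncomputable def nextCoef {ι : Type} (t : ℝ) (u : Fin n → ℝ) (J : ι → Finset (Fin n)) (c : ι → ℝ) :
    ι × Option (Fin n) → ℝ
  | (a, none) => c a * t
  | (a, some j) => if j ∈ J a then 0 else c a * u j

lemma sum_next {ι : Type} [Fintype ι] (t : ℝ) (u : Fin n → ℝ) (J : ι → Finset (Fin n)) (c : ι → ℝ)
    (f : Finset (Fin n) → ℝ) :
    ∑ p, nextCoef t u J c p * f (nextSet J p) =
      ∑ a, c a * (t * f (J a) + ∑ j, if j ∈ J a then 0 else u j * f (insert j (J a))) := by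
  rw [Fintype.sum_prod_type]
  refine Finset.sum_congr rfl fun a _ => ?_
  rw [Fintype.sum_option, mul_add, Finset.mul_sum]
  congr 1
  · simp only [nextCoef, nextSet]; ring
  · refine Finset.sum_congr rfl fun j _ => ?_
    simp only [nextCoef, nextSet]
    split_ifs
    · simp
    · ring

/-- The expected logarithm of a mixture of determinants is close to the logarithm of its mean, with a
loss of `rowLoss` per row. The statement is about mixtures because averaging out a row of one
determinant yields a mixture. Each step trades one remaining row for at most one deleted column, so
`q + r + k ≤ n + 1` persists and all residuals keep trace at least `q`. -/
lemma log_mixture {t b a : ℝ} (ht : 0 < t) (hb : 0 < b) {q : ℕ} (hq : 0 < q) :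
    ∀ {k : ℕ} (w : Fin k → Fin n → ℝ) (_ : ∀ i j, w i j ∈ Set.Icc (b ^ 2) (a ^ 2))
    {ι : Type} [Fintype ι] (J : ι → Finset (Fin n)) (c : ι → ℝ) (_ : ∀ i, 0 ≤ c i)
    (_ : 0 < ∑ i, c i) (r : ℕ) (_ : ∀ i, (J i).card ≤ r) (_ : q + r + k ≤ n + 1),
    Real.log (∑ i, c i * matchGen t w (J i)) - k * rowLoss t b a n q ≤
      ∫ G, Real.log (∑ i, c i * detMask t w (J i) G) ∂(matMeas k n)
  | 0, w, _, ι, _, J, c, _, _, r, _, _ => by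
    simp [matchGen, detMask]
  | k + 1, w, hw, ι, _, J, c, hc, hc0, r, hr, hqn => by
    have hw0 : ∀ i j, 0 ≤ w i j := fun i j => (sq_nonneg b).trans (hw i j).1
    set w' : Fin k → Fin n → ℝ := fun i => w i.succ with hw'
    have ih := log_mixture ht hb hq w' (fun i => hw i.succ) (nextSet J) (nextCoef t (w 0) J c)
      (by
        rintro ⟨i, _ | j⟩
        · exact mul_nonneg (hc i) ht.le
        · simp only [nextCoef]
          split_ifs
          · exact le_rfl
          · exact mul_nonneg (hc i) (hw0 0 j))
      (by
        have h := sum_next t (w 0) J c (fun _ => 1)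
        simp only [mul_one] at h
        rw [h]
        calc 0 < (∑ i, c i) * t := mul_pos hc0 ht
          _ ≤ _ := by
            rw [Finset.sum_mul]
            refine Finset.sum_le_sum fun i _ => mul_le_mul_of_nonneg_left ?_ (hc i)
            refine le_add_of_nonneg_right (Finset.sum_nonneg fun j _ => ?_)
            split_ifs
            · exact le_rfl
            · exact hw0 0 j)
      (r + 1)
      (by
        rintro ⟨i, _ | j⟩
        · exact (hr i).trans (Nat.le_succ r)
        · exact (Finset.card_insert_le _ _).trans (Nat.succ_le_succ (hr i)))
      (by omega)
    have hsn : ∀ G, ∑ p, nextCoef t (w 0) J c p * detMask t w' (nextSet J p) G =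
        ∑ i, c i * (t * detMask t w' (J i) G + ∑ j, if j ∈ J i then 0 else
          w 0 j * detMask t w' (insert j (J i)) G) := fun G =>
      sum_next t (w 0) J c (fun K => detMask t w' K G)
    rw [sum_next t (w 0) J c (fun K => matchGen t w' K)] at ih
    simp only [hsn] at ih
    have hlow : ∀ {k' : ℕ} (v : Fin k' → Fin n → ℝ) (G : Fin k' → Fin n → ℝ),
        (∑ i, c i) * t ^ k' ≤ ∑ i, c i * detMask t v (J i) G := by
      intro k' v G
      rw [Finset.sum_mul]
      exact Finset.sum_le_sum fun i _ =>
        mul_le_mul_of_nonneg_left (pow_le_detMask ht v (J i) G) (hc i)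
    have hFI : Integrable (fun G => ∑ i, c i * detMask t w (J i) G) (matMeas (k + 1) n) :=
      integrable_finsetSum _ fun i _ => (integral_detMask ht w hw0 (J i)).1.const_mul _
    have hlogI := integrable_log_of (mul_pos hc0 (pow_pos ht (k + 1))) hFI (hlow w)
    obtain ⟨hfI, hfE⟩ := fubini_cons hlogI
    -- Conditionally on the lower rows `y`, the mixture is a constant times a single row factor whose
    -- matrix is the convex combination of the residuals, so the one-row bound applies.
    have hrow : ∀ y, Real.log (∑ i, c i * (t * detMask t w' (J i) y + ∑ j, if j ∈ J i then 0 else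
          w 0 j * detMask t w' (insert j (J i)) y)) - rowLoss t b a n q ≤
        ∫ x, Real.log (∑ i, c i * detMask t w (J i) (Fin.cons x y)) ∂(rowMeas n) := by
      intro y
      set d : ι → ℝ := fun i => c i * detMask t w' (J i) y with hd
      have hd0 : 0 < ∑ i, d i := (mul_pos hc0 (pow_pos ht k)).trans_le (hlow w' y)
      have hdn : ∀ i, 0 ≤ d i := fun i => mul_nonneg (hc i) (detMask_pos ht _ _ _).le
      set B : Fin n → Fin n → ℝ := fun i j =>
        ∑ a', d a' / (∑ a'', d a'') * rowResid t w' (J a') y i j with hB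
      have hBS : IsShrink (q : ℝ) B := by
        refine IsShrink.mix (fun a' => d a' / (∑ a'', d a''))
          (fun i => div_nonneg (hdn i) hd0.le) ?_ _ ?_
        · rw [← Finset.sum_div, div_self hd0.ne']
        · intro i
          refine (rowResid_isShrink ht w' (J i) y).mono ?_
          have h1 : ((J i).card : ℝ) ≤ r := by exact_mod_cast hr i
          have h2 : (q : ℝ) + r + (k + 1) ≤ n + 1 := by exact_mod_cast hqn
          linarith
      have e1 : ∀ x, ∑ i, c i * detMask t w (J i) (Fin.cons x y) =
          (∑ i, d i) * rowForm t (w 0) B x := by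
        intro x
        rw [hB, ← sum_rowForm t (w 0) d hd0]
        refine Finset.sum_congr rfl fun i _ => ?_
        rw [detMask_cons ht, hd, mul_assoc]
      have hIB := integral_rowForm t (w 0) (hw0 0) B
      have hIi := fun i => integral_rowForm t (w 0) (hw0 0) (rowResid t w' (J i) y)
      have e2 : ∑ i, c i * (t * detMask t w' (J i) y + ∑ j, if j ∈ J i then 0 else
          w 0 j * detMask t w' (insert j (J i)) y) =
          (∑ i, d i) * (t + ∑ j, w 0 j * B j j) := by
        rw [← hIB.2, ← integral_const_mul]
        simp only [hB, ← sum_rowForm t (w 0) d hd0]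
        rw [integral_finsetSum _ fun i _ => (hIi i).1.const_mul _]
        refine Finset.sum_congr rfl fun i _ => ?_
        rw [integral_const_mul, (hIi i).2, ← detMask_mean ht, hd, mul_assoc]
      have hpos : 0 < t + ∑ j, w 0 j * B j j :=
        add_pos_of_pos_of_nonneg ht (Finset.sum_nonneg fun j _ =>
          mul_nonneg (hw0 0 j) (hBS.diag_nonneg j))
      simp only [e1]
      rw [e2, Real.log_mul hd0.ne' hpos.ne']
      have e3 : ∀ x, Real.log ((∑ i, d i) * rowForm t (w 0) B x) =
          Real.log (∑ i, d i) + Real.log (rowForm t (w 0) B x) := fun x =>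
        Real.log_mul hd0.ne' (ht.trans_le (le_rowForm (w 0) hBS x)).ne'
      simp only [e3]
      rw [integral_add (integrable_const _)
        (integrable_log_of ht hIB.1 (le_rowForm (w 0) hBS))]
      have := log_rowForm ht hb hq (w 0) (hw 0) hBS
      simp only [integral_const, probReal_univ, smul_eq_mul, one_mul]
      linarith
    have hnextI : Integrable (fun y => Real.log (∑ i, c i * (t * detMask t w' (J i) y +
        ∑ j, if j ∈ J i then 0 else w 0 j * detMask t w' (insert j (J i)) y))) (matMeas k n) := by
      refine integrable_log_of (c := (∑ i, c i) * t ^ k * t)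
        (mul_pos (mul_pos hc0 (pow_pos ht k)) ht) ?_ ?_
      · simp only [← hsn]
        exact integrable_finsetSum _ fun p _ =>
          (integral_detMask ht w' (fun i => hw0 i.succ) _).1.const_mul _
      · intro y
        calc (∑ i, c i) * t ^ k * t ≤ (∑ i, c i * detMask t w' (J i) y) * t :=
              mul_le_mul_of_nonneg_right (hlow w' y) ht.le
          _ ≤ _ := by
            rw [Finset.sum_mul]
            refine Finset.sum_le_sum fun i _ => ?_
            rw [mul_assoc, mul_comm _ t]
            refine mul_le_mul_of_nonneg_left ?_ (hc i)
            refine le_add_of_nonneg_right (Finset.sum_nonneg fun j _ => ?_)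
            split_ifs
            · exact le_rfl
            · exact mul_nonneg (hw0 0 j) (detMask_pos ht _ _ _).le
    have hmono := integral_mono (hnextI.sub (integrable_const (rowLoss t b a n q))) hfI hrow
    simp only [Pi.sub_apply] at hmono
    rw [integral_sub hnextI (integrable_const _)] at hmono
    simp only [integral_const, probReal_univ, smul_eq_mul, one_mul] at hmono
    rw [hfE]
    simp only [matchGen]
    push_cast
    linarith

end Mixture

/-! ### Discarding rows -/

section Dropping

variable {k n : ℕ}

/-- Forbidding more columns decreases the matching generating function. -/
lemma matchGen_insert_le {t : ℝ} (ht : 0 < t) : ∀ {k : ℕ} (w : Fin k → Fin n → ℝ)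
    (_ : ∀ i j, 0 ≤ w i j) (J J' : Finset (Fin n)) (_ : J ⊆ J'), matchGen t w J' ≤ matchGen t w J
  | 0, w, _, J, _, _ => by simp [matchGen]
  | k + 1, w, hw, J, J', h => by
    rw [matchGen, matchGen]
    have ih := matchGen_insert_le ht (fun i => w i.succ) (fun i => hw i.succ)
    refine add_le_add (mul_le_mul_of_nonneg_left (ih _ _ h) ht.le)
      (Finset.sum_le_sum fun j _ => ?_)
    have h0 := mul_nonneg (hw 0 j)
      (matchGen_pos ht (fun i => w i.succ) (fun i => hw i.succ) (insert j J)).le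
    split_ifs with h1 h2 h2
    · exact le_rfl
    · exact h0
    · exact absurd (h h2) h1
    · exact mul_le_mul_of_nonneg_left (ih _ _ (Finset.insert_subset_insert _ h)) (hw 0 j)

lemma integrable_log_detMask {t : ℝ} (ht : 0 < t) (w : Fin k → Fin n → ℝ)
    (hw : ∀ i j, 0 ≤ w i j) (J : Finset (Fin n)) :
    Integrable (fun G => Real.log (detMask t w J G)) (matMeas k n) :=
  integrable_log_of (pow_pos ht k) (integral_detMask ht w hw J).1 (pow_le_detMask ht w J)

/-- A top row may be discarded at the cost `lossEll`: it multiplies the mean by at most `t + a² n` and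
the determinant by at least `t`. -/
lemma log_drop_row {t b a : ℝ} (ht : 0 < t) (w : Fin (k + 1) → Fin n → ℝ)
    (hw : ∀ i j, w i j ∈ Set.Icc (b ^ 2) (a ^ 2)) {L : ℝ}
    (h : Real.log (matchGen t (fun i => w i.succ) ∅) - L ≤
      ∫ G, Real.log (detMask t (fun i => w i.succ) ∅ G) ∂(matMeas k n)) :
    Real.log (matchGen t w ∅) - (L + lossEll t a n) ≤
      ∫ G, Real.log (detMask t w ∅ G) ∂(matMeas (k + 1) n) := by
  have hw0 : ∀ i j, 0 ≤ w i j := fun i j => (sq_nonneg b).trans (hw i j).1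
  set w' : Fin k → Fin n → ℝ := fun i => w i.succ with hw'
  have hw0' : ∀ i j, 0 ≤ w' i j := fun i => hw0 i.succ
  have hp := matchGen_pos ht w' hw0' ∅
  have hT : 0 < t + a ^ 2 * n := add_pos_of_pos_of_nonneg ht (by positivity)
  have h1 : matchGen t w ∅ ≤ (t + a ^ 2 * n) * matchGen t w' ∅ := by
    rw [matchGen, add_mul]
    refine add_le_add le_rfl ?_
    calc _ ≤ ∑ _j : Fin n, a ^ 2 * matchGen t w' ∅ := by
          refine Finset.sum_le_sum fun j _ => ?_
          rw [if_neg (Finset.notMem_empty j)]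
          exact mul_le_mul (hw 0 j).2 (matchGen_insert_le ht w' hw0' _ _ (Finset.empty_subset _))
            (matchGen_pos ht w' hw0' _).le (sq_nonneg a)
      _ = _ := by simp; ring
  have h2 : Real.log (matchGen t w ∅) ≤
      Real.log (t + a ^ 2 * n) + Real.log (matchGen t w' ∅) := by
    rw [← Real.log_mul hT.ne' hp.ne']
    exact Real.log_le_log (matchGen_pos ht w hw0 ∅) h1
  have h3 : lossEll t a n = Real.log (t + a ^ 2 * n) - Real.log t := by
    rw [lossEll, Real.log_div hT.ne' ht.ne']
  have hI := integrable_log_detMask ht w hw0 ∅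
  have hI' := integrable_log_detMask ht w' hw0' ∅
  obtain ⟨f1, f2⟩ := fubini_cons hI
  have hy : ∀ y, Real.log (detMask t w' ∅ y) + Real.log t ≤
      ∫ x, Real.log (detMask t w ∅ (Fin.cons x y)) ∂(rowMeas n) := by
    intro y
    have hS := rowResid_isShrink ht w' ∅ y
    have hIB := integral_rowForm t (w 0) (hw0 0) (rowResid t w' ∅ y)
    have e3 : ∀ x, Real.log (detMask t w ∅ (Fin.cons x y)) = Real.log (detMask t w' ∅ y) +
        Real.log (rowForm t (w 0) (rowResid t w' ∅ y) x) := fun x => by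
      rw [detMask_cons ht, Real.log_mul (detMask_pos ht _ _ _).ne'
        (ht.trans_le (le_rowForm (w 0) hS x)).ne']
    simp only [e3]
    have hi : Integrable (fun x => Real.log (detMask t w' ∅ y) +
        Real.log (rowForm t (w 0) (rowResid t w' ∅ y) x)) (rowMeas n) :=
      (integrable_const _).add (integrable_log_of ht hIB.1 (le_rowForm (w 0) hS))
    have := integral_mono (integrable_const (Real.log (detMask t w' ∅ y) + Real.log t)) hi
      (fun x => add_le_add le_rfl (Real.log_le_log ht (le_rowForm (w 0) hS x)))
    simpa using this
  have hm := integral_mono (hI'.add (integrable_const (Real.log t))) f1 hy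
  simp only [Pi.add_apply] at hm
  rw [integral_add hI' (integrable_const _)] at hm
  simp only [integral_const, probReal_univ, smul_eq_mul, one_mul] at hm
  rw [f2]
  linarith

lemma rowLoss_nonneg {t b a : ℝ} (ht : 0 < t) (n q : ℕ) : 0 ≤ rowLoss t b a n q := by
  have := lossEll_nonneg (a := a) ht n
  have := gaussMoment_four_nonneg
  unfold rowLoss
  positivity

/-- Lower bound for the expected log-determinant: the surplus `q + k - (n + 1)` rows (a truncated
subtraction, zero when there is no surplus) are discarded, the others cost `rowLoss` each. -/
lemma log_matchGen_le {t b a : ℝ} (ht : 0 < t) (hb : 0 < b) {q : ℕ} (hq : 0 < q) (hqn : q ≤ n + 1) :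
    ∀ {k : ℕ} (w : Fin k → Fin n → ℝ) (_ : ∀ i j, w i j ∈ Set.Icc (b ^ 2) (a ^ 2)) (_ : k ≤ n),
    Real.log (matchGen t w ∅) -
      (n * rowLoss t b a n q + ((q + k - (n + 1) : ℕ) : ℝ) * lossEll t a n) ≤
      ∫ G, Real.log (detMask t w ∅ G) ∂(matMeas k n)
  | k, w, hw, hk => by
    by_cases h : q + k ≤ n + 1
    · have h1 := log_mixture ht hb hq w hw (fun _ : Unit => ∅) (fun _ => 1) (fun _ => zero_le_one)
        (by simp) 0 (by simp) (by omega)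
      simp only [Finset.univ_unique, Finset.sum_singleton, one_mul] at h1
      have h2 : (k : ℝ) ≤ n := by exact_mod_cast hk
      have h3 := mul_le_mul_of_nonneg_right h2 (rowLoss_nonneg (b := b) (a := a) ht n q)
      have h4 : q + k - (n + 1) = 0 := by omega
      rw [h4, Nat.cast_zero]
      linarith
    · match k, w, hw, hk, h with
      | 0, _, _, _, h => omega
      | k + 1, w, hw, hk, h =>
        have ih := log_matchGen_le ht hb hq hqn (fun i => w i.succ) (fun i => hw i.succ) (by omega)
        have h1 := log_drop_row ht w hw ih
        have h2 : q + (k + 1) - (n + 1) = (q + k - (n + 1)) + 1 := by omega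
        rw [h2]
        push_cast
        linarith

end Dropping

/-! ### The matching polynomial of the weighted complete bipartite graph -/

section Matchings

variable {k m n : ℕ}

/-- `σ` assigns to each row its partner, if any; partners are distinct and avoid `J`. -/
def IsPartialMatching (J : Finset (Fin n)) (σ : Fin k → Option (Fin n)) : Prop :=
  (∀ i j, σ i = some j → j ∉ J) ∧ ∀ i i' j, σ i = some j → σ i' = some j → i = i'

lemma isPartialMatching_cons_none (J : Finset (Fin n)) (σ : Fin k → Option (Fin n)) :
    IsPartialMatching J (Fin.cons none σ : Fin (k + 1) → Option (Fin n)) ↔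
      IsPartialMatching J σ := by
  simp [IsPartialMatching, Fin.forall_fin_succ]

lemma isPartialMatching_cons_some (J : Finset (Fin n)) (j : Fin n) (σ : Fin k → Option (Fin n)) :
    IsPartialMatching J (Fin.cons (some j) σ : Fin (k + 1) → Option (Fin n)) ↔
      j ∉ J ∧ IsPartialMatching (insert j J) σ := by
  simp only [IsPartialMatching, Fin.forall_fin_succ, Fin.cons_zero, Fin.cons_succ,
    Option.some.injEq, Finset.mem_insert, not_or, Fin.succ_inj]
  constructor
  · rintro ⟨⟨h1, h2⟩, h3, h4⟩
    refine ⟨h1 j rfl, fun i j' h => ⟨?_, h2 i j' h⟩, fun i i' j' h h' => ?_⟩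
    · rintro rfl
      exact (Fin.succ_ne_zero i) (h4 i |>.1 j' h rfl)
    · exact (h4 i).2 i' j' h h'
  · rintro ⟨h1, h2, h3⟩
    refine ⟨⟨?_, fun i j' h => (h2 i j' h).2⟩, ⟨fun _ _ _ => trivial, ?_⟩, fun i => ⟨?_, ?_⟩⟩
    · rintro j' rfl; exact h1
    · rintro i j' rfl h; exact absurd rfl (h2 i _ h).1
    · rintro j' h rfl; exact absurd rfl (h2 i _ h).1
    · exact fun i' j' h h' => h3 i i' j' h h'

open Classical in
lemma matchGen_eq_sum (t : ℝ) : ∀ {k : ℕ} (w : Fin k → Fin n → ℝ) (J : Finset (Fin n)),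
    matchGen t w J = ∑ σ : Fin k → Option (Fin n),
      if IsPartialMatching J σ then ∏ i, (σ i).elim t (w i) else 0
  | 0, w, J => by
    simp [matchGen, IsPartialMatching]
  | k + 1, w, J => by
    have hcons : ∀ f : (Fin (k + 1) → Option (Fin n)) → ℝ,
        ∑ σ, f σ = ∑ o, ∑ σ : Fin k → Option (Fin n), f (Fin.cons o σ) := fun f => by
      rw [← (Fin.consEquiv (fun _ : Fin (k + 1) => Option (Fin n))).sum_comp,
        Fintype.sum_prod_type]
      rfl
    rw [hcons, Fintype.sum_option, matchGen, matchGen_eq_sum t]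
    simp only [isPartialMatching_cons_none, isPartialMatching_cons_some,
      Fin.prod_univ_succ, Fin.cons_zero, Fin.cons_succ, Option.elim_none, Option.elim_some]
    congr 1
    · rw [Finset.mul_sum]
      exact Finset.sum_congr rfl fun σ _ => by rw [mul_ite, mul_zero]
    · refine Finset.sum_congr rfl fun j _ => ?_
      rw [matchGen_eq_sum t]
      by_cases h : j ∈ J
      · simp [h]
      · simp [h, Finset.mul_sum]

/-- The edges of a partial matching, as row-column pairs. -/
def edgesOf (σ : Fin m → Option (Fin n)) : Finset (Fin m × Fin n) :=
  Finset.univ.filter fun q => σ q.1 = some q.2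

/-- The edge between row `i` and column `j` as an ordered pair of vertices of the bipartite graph on
`Fin (m + n)`, rows coming first. -/
def edgeEmb (m n : ℕ) : Fin m × Fin n ↪ Fin (m + n) × Fin (m + n) where
  toFun q := (Fin.castAdd n q.1, Fin.natAdd m q.2)
  inj' := by
    rintro ⟨i, j⟩ ⟨i', j'⟩ h
    simpa using h

lemma edgeEmb_apply (i : Fin m) (j : Fin n) :
    edgeEmb m n (i, j) = (Fin.castAdd n i, Fin.natAdd m j) := rfl

lemma prod_edgesOf (σ : Fin m → Option (Fin n)) (v : Fin m → Fin n → ℝ) :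
    ∏ q ∈ edgesOf σ, v q.1 q.2 = ∏ i, (σ i).elim 1 (v i) := by
  rw [edgesOf, Finset.prod_filter, Fintype.prod_prod_type]
  refine Finset.prod_congr rfl fun i _ => ?_
  rcases h : σ i with _ | j
  · simp [h]
  · simp [h, Finset.prod_ite_eq]

/-- The weight of a partial matching with `c` edges is `t ^ (m - c)` times the product of its edge
weights, stated without subtraction. -/
lemma prod_elim_mul_pow (t : ℝ) (σ : Fin m → Option (Fin n)) (w : Fin m → Fin n → ℝ) :
    (∏ i, (σ i).elim t (w i)) * t ^ (edgesOf σ).card =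
      t ^ m * ∏ q ∈ edgesOf σ, w q.1 q.2 := by
  rw [prod_edgesOf, ← Finset.prod_const, prod_edgesOf σ (fun _ _ => t), ← Finset.prod_mul_distrib]
  have : t ^ m = ∏ _i : Fin m, t := by simp
  rw [this, ← Finset.prod_mul_distrib]
  refine Finset.prod_congr rfl fun i _ => ?_
  rcases σ i with _ | j <;> simp [mul_comm]

lemma card_edgesOf_le (σ : Fin m → Option (Fin n)) : (edgesOf σ).card ≤ m := by
  have h : (edgesOf σ).card ≤ (Finset.univ : Finset (Fin m)).card := by
    refine Finset.card_le_card_of_injOn Prod.fst (fun _ _ => Finset.mem_univ _) ?_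
    rintro ⟨i, j⟩ h ⟨i', j'⟩ h' e
    simp only [edgesOf, Finset.coe_filter, Set.mem_ofPred_eq, Finset.mem_univ, true_and] at h h' e
    subst e
    rw [h] at h'
    simpa using h'
  simpa using h

lemma bipartiteSkew_inl_inr (w : Fin m → Fin n → ℝ) (i : Fin m) (j : Fin n) :
    bipartiteSkew w (Fin.castAdd n i) (Fin.natAdd m j) = √(w i j) := by
  simp [bipartiteSkew]

lemma bipartiteSkew_inr_inl (w : Fin m → Fin n → ℝ) (i : Fin m) (j : Fin n) :
    bipartiteSkew w (Fin.natAdd m j) (Fin.castAdd n i) = -√(w i j) := by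
  simp [bipartiteSkew]

lemma bipartiteSkew_inl_inl (w : Fin m → Fin n → ℝ) (i i' : Fin m) :
    bipartiteSkew w (Fin.castAdd n i) (Fin.castAdd n i') = 0 := by
  simp [bipartiteSkew]

lemma bipartiteSkew_inr_inr (w : Fin m → Fin n → ℝ) (j j' : Fin n) :
    bipartiteSkew w (Fin.natAdd m j) (Fin.natAdd m j') = 0 := by
  simp [bipartiteSkew]

/-- The matching condition that appears in the definition of `phiW`: increasing pairs, pairwise
disjoint. -/
def IsMatchingSet {N : ℕ} (M : Finset (Fin N × Fin N)) : Prop :=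
  (∀ p ∈ M, p.1 < p.2) ∧
    ∀ p ∈ M, ∀ q ∈ M, p ≠ q → p.1 ≠ q.1 ∧ p.1 ≠ q.2 ∧ p.2 ≠ q.1 ∧ p.2 ≠ q.2

open Classical in
/-- The matching polynomial as a single sum over matchings. The cardinality bound holds for every
matching, but keeping it in the index set spares a proof of that. -/
lemma PhiW_eq_sum {N : ℕ} (A : Matrix (Fin N) (Fin N) ℝ) (t : ℝ) :
    PhiW A t = ∑ M ∈ Finset.univ.filter (fun M : Finset (Fin N × Fin N) =>
      IsMatchingSet M ∧ M.card ≤ N / 2),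
        (∏ p ∈ M, (A p.1 p.2) ^ 2) * t ^ (N / 2 - M.card) := by
  rw [← Finset.sum_fiberwise_of_maps_to (t := Finset.range (N / 2 + 1)) (g := Finset.card)
    (by
      intro M hM
      simp only [Finset.mem_filter, Finset.mem_univ, true_and] at hM
      exact Finset.mem_range.2 (Nat.lt_succ_of_le hM.2)), PhiW]
  refine Finset.sum_congr rfl fun k hk => ?_
  rw [phiW, Finset.sum_mul, Finset.filter_filter]
  have hk' := Nat.lt_succ_iff.1 (Finset.mem_range.1 hk)
  refine Finset.sum_congr ?_ ?_
  · ext M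
    simp only [Finset.mem_filter, Finset.mem_univ, true_and]
    constructor
    · rintro ⟨h, rfl⟩; exact ⟨⟨h, hk'⟩, rfl⟩
    · rintro ⟨⟨h, _⟩, rfl⟩; exact ⟨h, rfl⟩
  · intro M hM
    simp only [Finset.mem_filter] at hM
    rw [hM.2.2]

/-- Only row-column pairs carry nonzero weight. -/
lemma exists_of_mem_of_ne_zero (w : Fin m → Fin n → ℝ) {p : Fin (m + n) × Fin (m + n)}
    (hp : p.1 < p.2) (h : bipartiteSkew w p.1 p.2 ≠ 0) : ∃ q, edgeEmb m n q = p := by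
  obtain ⟨x, y⟩ := p
  simp only at hp h
  induction x using Fin.addCases with
  | left i =>
    induction y using Fin.addCases with
    | left i' => exact absurd (bipartiteSkew_inl_inl w i i') h
    | right j => exact ⟨(i, j), rfl⟩
  | right j =>
    induction y using Fin.addCases with
    | left i' =>
      exfalso
      have h1 := i'.2
      simp only [Fin.lt_def, Fin.val_natAdd, Fin.val_castAdd] at hp
      omega
    | right j' => exact absurd (bipartiteSkew_inr_inr w j j') h

open Classical in
/-- The matching polynomial of the weighted complete bipartite graph is the matching generating function,
up to the same power of `√t` that appears in `det_sampleY`. -/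
lemma PhiFull_bipartiteSkew {t : ℝ} (ht : 0 < t) (hmn : m ≤ n) (w : Fin m → Fin n → ℝ)
    (hw : ∀ i j, 0 ≤ w i j) :
    PhiFull (bipartiteSkew w) t = √t ^ (n - m) * matchGen t w ∅ := by
  have hst : √t ^ 2 = t := Real.sq_sqrt ht.le
  have hpar : (if Even (m + n) then 1 else √t) * t ^ ((m + n) / 2) = √t ^ (m + n) := by
    conv_lhs => rw [← hst]
    rw [← pow_mul, hst]
    split_ifs with h
    · rw [Nat.mul_div_cancel' h.two_dvd, one_mul]
    · rw [← pow_succ', Nat.two_mul_div_two_add_one_of_odd (Nat.not_even_iff_odd.1 h)]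
  rw [PhiFull, PhiW_eq_sum, matchGen_eq_sum, Finset.mul_sum, Finset.mul_sum]
  symm
  rw [← Finset.sum_filter_add_sum_filter_not Finset.univ
    (fun σ : Fin m → Option (Fin n) => IsPartialMatching ∅ σ)]
  rw [add_eq_left.2 (Finset.sum_eq_zero fun σ hσ => by
    rw [if_neg (Finset.mem_filter.1 hσ).2, mul_zero])]
  refine Finset.sum_of_injOn (fun σ => (edgesOf σ).map (edgeEmb m n)) ?_ ?_ ?_ ?_
  · intro σ _ σ' _ h
    have h := Finset.map_injective _ h
    funext i
    have h1 : ∀ j, σ i = some j ↔ σ' i = some j := fun j => by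
      have := Finset.ext_iff.1 h (i, j)
      simpa [edgesOf] using this
    exact Option.ext h1
  · intro σ hσ
    have hσ := (Finset.mem_filter.1 hσ).2
    simp only [Finset.coe_filter, Finset.mem_univ, true_and, Set.mem_ofPred_eq, Finset.card_map]
    refine ⟨⟨?_, ?_⟩, (card_edgesOf_le σ).trans (by omega)⟩
    · intro p hp
      obtain ⟨⟨i, j⟩, _, rfl⟩ := Finset.mem_map.1 hp
      have := i.2
      simp only [edgeEmb_apply, Fin.lt_def, Fin.val_natAdd, Fin.val_castAdd]
      omega
    · intro p hp p' hp' hne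
      obtain ⟨⟨i, j⟩, hq, rfl⟩ := Finset.mem_map.1 hp
      obtain ⟨⟨i', j'⟩, hq', rfl⟩ := Finset.mem_map.1 hp'
      simp only [edgesOf, Finset.mem_filter, Finset.mem_univ, true_and] at hq hq'
      have h1 := i.2
      have h2 := i'.2
      have hii : i ≠ i' := by
        rintro rfl
        rw [hq] at hq'
        apply hne
        rw [Option.some.inj hq']
      have hjj : j ≠ j' := by
        rintro rfl
        exact hii (hσ.2 _ _ _ hq hq')
      simp only [edgeEmb_apply, ne_eq, Fin.ext_iff, Fin.val_natAdd,
        Fin.val_castAdd] at hii hjj ⊢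
      omega
  · intro M hM hMn
    obtain ⟨⟨hlt, hdis⟩, _⟩ := (Finset.mem_filter.1 hM).2
    by_contra hne
    apply hMn
    have hnz : ∀ p ∈ M, ∃ q, edgeEmb m n q = p := by
      intro p hp
      refine exists_of_mem_of_ne_zero w (hlt p hp) fun h0 => hne ?_
      rw [Finset.prod_eq_zero hp (by rw [h0]; norm_num)]
      simp
    set σ : Fin m → Option (Fin n) := fun i =>
      if h : ∃ j, edgeEmb m n (i, j) ∈ M then some h.choose else none with hσ
    have huniq : ∀ i i' j j', edgeEmb m n (i, j) ∈ M → edgeEmb m n (i', j') ∈ M →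
        (i = i' ∨ j = j') → i = i' ∧ j = j' := by
      intro i i' j j' h h' hor
      by_contra hcon
      have hne' : edgeEmb m n (i, j) ≠ edgeEmb m n (i', j') := fun e => hcon (by
        simpa using (edgeEmb m n).injective e)
      obtain ⟨h1, _, _, h4⟩ := hdis _ h _ h' hne'
      rcases hor with rfl | rfl
      · exact h1 rfl
      · exact h4 rfl
    have hσs : ∀ i j, σ i = some j ↔ edgeEmb m n (i, j) ∈ M := by
      intro i j
      constructor
      · intro h
        simp only [hσ] at h
        split_ifs at h with hex
        rw [← Option.some.inj h]
        exact hex.choose_spec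
      · intro h
        have hex : ∃ j, edgeEmb m n (i, j) ∈ M := ⟨j, h⟩
        simp only [hσ]
        rw [dif_pos hex, (huniq _ _ _ _ hex.choose_spec h (Or.inl rfl)).2]
    refine ⟨σ, ?_, ?_⟩
    · simp only [Finset.coe_filter, Finset.mem_univ, true_and, Set.mem_ofPred_eq]
      refine ⟨fun _ _ _ => Finset.notMem_empty _, fun i i' j h h' => ?_⟩
      exact (huniq _ _ _ _ ((hσs _ _).1 h) ((hσs _ _).1 h') (Or.inr rfl)).1
    · ext p
      simp only [Finset.mem_map, edgesOf, Finset.mem_filter, Finset.mem_univ, true_and]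
      constructor
      · rintro ⟨q, hq, rfl⟩; exact (hσs _ _).1 hq
      · intro hp
        obtain ⟨q, rfl⟩ := hnz p hp
        exact ⟨q, (hσs _ _).2 hp, rfl⟩
  · intro σ hσ
    rw [if_pos (Finset.mem_filter.1 hσ).2, Finset.prod_map, Finset.card_map]
    have hA : ∀ q : Fin m × Fin n,
        bipartiteSkew w (edgeEmb m n q).1 (edgeEmb m n q).2 ^ 2 = w q.1 q.2 := fun ⟨i, j⟩ => by
      rw [edgeEmb_apply, bipartiteSkew_inl_inr, Real.sq_sqrt (hw _ _)]
    simp only [hA]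
    have hc := card_edgesOf_le σ
    set c := (edgesOf σ).card with hcdef
    -- Multiplying by `t ^ c` removes the truncated exponent `(m + n) / 2 - c`.
    apply mul_right_cancel₀ (pow_pos ht c).ne'
    rw [mul_assoc, hcdef, prod_elim_mul_pow, ← hcdef]
    have e1 : t ^ ((m + n) / 2 - c) * t ^ c = t ^ ((m + n) / 2) := by
      rw [← pow_add]; congr 1; omega
    have e2 : √t ^ (n - m) * t ^ m = √t ^ (m + n) := by
      conv_lhs => rw [← hst]
      rw [← pow_mul, hst, ← pow_add]; congr 1; omega
    calc _ = (√t ^ (n - m) * t ^ m) * ∏ q ∈ edgesOf σ, w q.1 q.2 := by ring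
      _ = _ := by
        rw [e2, ← hpar, ← e1]; ring

end Matchings

/-! ### Reduction to a Gram determinant -/

section Reduction

variable {m n : ℕ}

lemma castAdd_lt_natAdd (i : Fin m) (j : Fin n) : Fin.castAdd n i < Fin.natAdd m j := by
  have := i.2
  simp only [Fin.lt_def, Fin.val_castAdd, Fin.val_natAdd]
  omega

/-- The Gaussians attached to the row-column pairs, as an `m × n` array. -/
def crossEntries (ξ : PairIdx (m + n) → ℝ) : Fin m → Fin n → ℝ := fun i j =>
  ξ ⟨(Fin.castAdd n i, Fin.natAdd m j), castAdd_lt_natAdd i j⟩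

lemma sampleY_bipartiteSkew (t : ℝ) (w : Fin m → Fin n → ℝ) (ξ : PairIdx (m + n) → ℝ) :
    (√t • (1 : Matrix (Fin (m + n)) (Fin (m + n)) ℝ) + sampleY (bipartiteSkew w) ξ) =
      Matrix.reindex finSumFinEquiv finSumFinEquiv
        (Matrix.fromBlocks (√t • 1) (maskMat w ∅ (crossEntries ξ))
          (-(maskMat w ∅ (crossEntries ξ))ᵀ) (√t • 1)) := by
  ext x y
  induction x using Fin.addCases with
  | left i =>
    induction y using Fin.addCases with
    | left i' =>
      simp [sampleY, bipartiteSkew_inl_inl, Matrix.one_apply]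
    | right j =>
      have h := castAdd_lt_natAdd i j
      simp [sampleY, bipartiteSkew_inl_inr, h, h.ne, maskMat, crossEntries]
  | right j =>
    induction y using Fin.addCases with
    | left i =>
      have h := castAdd_lt_natAdd i j
      simp [sampleY, bipartiteSkew_inr_inl, h, h.ne', h.not_gt, maskMat,
        crossEntries]
    | right j' =>
      simp [sampleY, bipartiteSkew_inr_inr, Matrix.one_apply]

/-- Schur complement with respect to the lower right block `√t I`. -/
lemma det_sampleY {t : ℝ} (ht : 0 < t) (hmn : m ≤ n) (w : Fin m → Fin n → ℝ)
    (ξ : PairIdx (m + n) → ℝ) :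
    (√t • (1 : Matrix (Fin (m + n)) (Fin (m + n)) ℝ) + sampleY (bipartiteSkew w) ξ).det =
      √t ^ (n - m) * detMask t w ∅ (crossEntries ξ) := by
  have hs : 0 < √t := Real.sqrt_pos.2 ht
  rw [sampleY_bipartiteSkew, Matrix.det_reindex_self]
  set H := maskMat w ∅ (crossEntries ξ) with hH
  have hinv : (√t • (1 : Matrix (Fin n) (Fin n) ℝ)) * ((√t)⁻¹ • 1) = 1 := by
    rw [Matrix.smul_mul, Matrix.one_mul, smul_smul, mul_inv_cancel₀ hs.ne', one_smul]
  let _ : Invertible (√t • (1 : Matrix (Fin n) (Fin n) ℝ)) :=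
    ⟨(√t)⁻¹ • 1, by
      rw [Matrix.smul_mul, Matrix.one_mul, smul_smul, inv_mul_cancel₀ hs.ne', one_smul], hinv⟩
  rw [Matrix.det_fromBlocks₂₂]
  have hinv' : ⅟(√t • (1 : Matrix (Fin n) (Fin n) ℝ)) = (√t)⁻¹ • 1 := rfl
  have e : regGram t H = √t • (√t • (1 : Matrix (Fin m) (Fin m) ℝ) -
      H * ⅟(√t • (1 : Matrix (Fin n) (Fin n) ℝ)) * -Hᵀ) := by
    rw [hinv', regGram]
    simp only [Matrix.mul_smul, Matrix.mul_one, Matrix.mul_neg, Matrix.smul_mul, sub_neg_eq_add,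
      smul_add, smul_smul]
    rw [Real.mul_self_sqrt ht.le, mul_inv_cancel₀ hs.ne', one_smul]
  rw [detMask, ← hH, e, Matrix.det_smul, Matrix.det_smul]
  simp only [Matrix.det_one, mul_one, Fintype.card_fin]
  rw [← mul_assoc, ← pow_add, Nat.sub_add_cancel hmn]

instance (N : ℕ) : IsProbabilityMeasure (gaussPi N) := by
  unfold gaussPi; infer_instance

lemma measurePreserving_crossEntries (m n : ℕ) :
    MeasurePreserving (crossEntries (m := m) (n := n)) (gaussPi (m + n)) (matMeas m n) := by
  have hmeas : Measurable (crossEntries (m := m) (n := n)) :=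
    measurable_pi_lambda _ fun i => measurable_pi_lambda _ fun j => measurable_pi_apply _
  refine ⟨hmeas, ?_⟩
  set f : Fin m × Fin n → PairIdx (m + n) := fun q =>
    ⟨(Fin.castAdd n q.1, Fin.natAdd m q.2), castAdd_lt_natAdd q.1 q.2⟩ with hf
  have hinj : Function.Injective f := by
    rintro ⟨i, j⟩ ⟨i', j'⟩ h
    simpa [hf] using h
  have hind : iIndepFun (fun (p : PairIdx (m + n)) (ξ : PairIdx (m + n) → ℝ) => ξ p)
      (gaussPi (m + n)) :=
    iIndepFun_pi (μ := fun _ : PairIdx (m + n) => gaussianReal 0 1) (X := fun _ x => x)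
      fun _ => aemeasurable_id
  have hind' := hind.precomp hinj
  rw [iIndepFun_iff_map_fun_eq_pi_map fun q => (measurable_pi_apply (f q)).aemeasurable] at hind'
  have hmarg : ∀ p : PairIdx (m + n),
      (gaussPi (m + n)).map (fun ξ => ξ p) = gaussianReal 0 1 := fun p =>
    (measurePreserving_eval (fun _ : PairIdx (m + n) => gaussianReal 0 1) p).map_eq
  simp only [hmarg] at hind'
  have hcurry := Measure.infinitePi_map_curry (fun (_ : Fin m) (_ : Fin n) => gaussianReal 0 1)
  simp only [Measure.infinitePi_eq_pi] at hcurry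
  rw [← hind', Measure.map_map (by fun_prop) (by fun_prop)] at hcurry
  exact hcurry

end Reduction

/-! ### Tail bound and asymptotics -/

section Tail

/-- A positive variable `X` of mean `Ψ` with `E log X ≥ log Ψ - L` has `log X` within `s` of `log Ψ`, up
to probability `L / (s - 1)`: Markov's inequality for `ψ = X / Ψ - 1 - log (X / Ψ) ≥ 0`, whose mean is at
most `L`. -/
lemma tail_bound {α : Type*} [MeasurableSpace α] {μ : Measure α} [IsProbabilityMeasure μ]
    {X : α → ℝ} {Ψ L s : ℝ} (hX : ∀ x, 0 < X x) (hΨ : 0 < Ψ) (hI : Integrable X μ)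
    (hlI : Integrable (fun x => Real.log (X x)) μ) (hE : ∫ x, X x ∂μ = Ψ)
    (hL : Real.log Ψ - L ≤ ∫ x, Real.log (X x) ∂μ) (hs : 1 < s) :
    μ.real {x | s < |Real.log (X x) - Real.log Ψ|} ≤ L / (s - 1) := by
  set ψ : α → ℝ := fun x => (X x / Ψ - 1) - (Real.log (X x) - Real.log Ψ) with hψ
  have hexp : ∀ x, Real.exp (Real.log (X x) - Real.log Ψ) = X x / Ψ := fun x => by
    rw [Real.exp_sub, Real.exp_log (hX x), Real.exp_log hΨ]
  have hI1 : Integrable (fun x => X x / Ψ - 1) μ := (hI.div_const Ψ).sub (integrable_const 1)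
  have hI2 : Integrable (fun x => Real.log (X x) - Real.log Ψ) μ := hlI.sub (integrable_const _)
  have hψI : Integrable ψ μ := hI1.sub hI2
  have hψ0 : ∀ x, 0 ≤ ψ x := fun x => by
    have := Real.add_one_le_exp (Real.log (X x) - Real.log Ψ)
    rw [hexp] at this
    simp only [hψ]; linarith
  have hψE : ∫ x, ψ x ∂μ ≤ L := by
    simp only [hψ]
    rw [integral_sub hI1 hI2, integral_sub (hI.div_const Ψ) (integrable_const 1),
      integral_sub hlI (integrable_const _), integral_div, hE, div_self hΨ.ne']
    simp only [integral_const, probReal_univ, smul_eq_mul, one_mul]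
    linarith
  have hsub : {x | s < |Real.log (X x) - Real.log Ψ|} ⊆ {x | s - 1 ≤ ψ x} := by
    intro x hx
    simp only [Set.mem_ofPred_eq, hψ] at hx ⊢
    rw [← hexp]
    set z := Real.log (X x) - Real.log Ψ
    rcases le_total 0 z with hz | hz
    · rw [abs_of_nonneg hz] at hx
      have := Real.quadratic_le_exp_of_nonneg hz
      nlinarith [sq_nonneg (z - 1)]
    · rw [abs_of_nonpos hz] at hx
      have := Real.exp_pos z
      linarith
  have hm := mul_meas_ge_le_integral_of_nonneg (Filter.Eventually.of_forall hψ0) hψI (s - 1)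
  have hs' : 0 < s - 1 := by linarith
  rw [le_div_iff₀ hs', mul_comm]
  calc (s - 1) * μ.real {x | s < |Real.log (X x) - Real.log Ψ|}
      ≤ (s - 1) * μ.real {x | s - 1 ≤ ψ x} :=
        mul_le_mul_of_nonneg_left (measureReal_mono hsub) hs'.le
    _ ≤ _ := hm.trans hψE

/-- The total loss for the choice `q = ⌊√n⌋ + 1`, which balances the `n` row losses of order `log n / q`
against the `q` discarded rows. -/
noncomputable def totalLoss (t b a : ℝ) (n : ℕ) : ℝ :=
  n * rowLoss t b a n (Nat.sqrt n + 1) + (Nat.sqrt n + 1 : ℕ) * lossEll t a n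

/-- The total loss is `O(√n log n)`, hence `O(n ^ (3 / 4))`. -/
lemma totalLoss_le {t : ℝ} (b a : ℝ) (ht : 0 < t) : ∃ D : ℝ, 0 ≤ D ∧ ∀ n : ℕ, 1 ≤ n →
    totalLoss t b a n ≤ D * ((n : ℝ) ^ (1 / 4 : ℝ)) ^ 3 := by
  set K : ℝ := (2 + gaussMoment 4) * (a ^ 4 / b ^ 4) with hK
  have hK0 : 0 ≤ K := by
    have := gaussMoment_four_nonneg
    positivity
  set C : ℝ := (t + a ^ 2) / t with hC
  have hC0 : 0 < C := by positivity
  set c : ℝ := C ^ (1 / 4 : ℝ) with hc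
  have hc0 : 0 ≤ c := by positivity
  refine ⟨2 * (2 * K + (4 * K + 1) * (4 * c)), by positivity, fun n hn => ?_⟩
  have hn1 : (1 : ℝ) ≤ n := by exact_mod_cast hn
  set x : ℝ := (n : ℝ) ^ (1 / 4 : ℝ) with hx
  have hx1 : 1 ≤ x := Real.one_le_rpow hn1 (by norm_num)
  have hx4 : x ^ 4 = n := by
    rw [hx, ← Real.rpow_natCast, ← Real.rpow_mul (by positivity)]; norm_num
  set q : ℕ := Nat.sqrt n + 1 with hq
  have hq0 : (0 : ℝ) < q := by positivity
  have hqn : (n : ℝ) ≤ q * q := by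
    exact_mod_cast (Nat.lt_succ_sqrt n).le
  have hqx : (q : ℝ) ≤ 2 * x ^ 2 := by
    have h1 : ((Nat.sqrt n : ℕ) : ℝ) ≤ x ^ 2 := by
      refine le_of_sq_le_sq ?_ (by positivity)
      have : ((Nat.sqrt n : ℕ) : ℝ) * (Nat.sqrt n : ℕ) ≤ n := by exact_mod_cast Nat.sqrt_le n
      nlinarith
    rw [hq]; push_cast
    nlinarith
  have hl0 := lossEll_nonneg (a := a) ht n
  have hl : lossEll t a n ≤ 4 * c * x := by
    have hy : (t + a ^ 2 * n) / t ≤ C * n := by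
      rw [hC, div_mul_eq_mul_div, div_le_div_iff_of_pos_right ht]
      nlinarith
    have hy0 : 0 < (t + a ^ 2 * n) / t := by positivity
    have h1 := Real.log_le_rpow_div (x := C * n) (ε := 1 / 4) (by positivity) (by norm_num)
    rw [Real.mul_rpow hC0.le (by positivity), ← hc, ← hx] at h1
    calc lossEll t a n ≤ Real.log (C * n) := Real.log_le_log hy0 hy
      _ ≤ _ := by linarith
  have hnq : (n : ℝ) / q ≤ q := by rwa [div_le_iff₀ hq0]
  calc totalLoss t b a n = (n / q) * ((2 + 4 * lossEll t a n) * K) + q * lossEll t a n := by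
        rw [totalLoss, rowLoss, ← hq, hK]; ring
    _ ≤ q * ((2 + 4 * lossEll t a n) * K) + q * lossEll t a n := by gcongr
    _ = q * (2 * K + (4 * K + 1) * lossEll t a n) := by ring
    _ ≤ (2 * x ^ 2) * (2 * K + (4 * K + 1) * (4 * c * x)) := by gcongr
    _ ≤ (2 * x ^ 2) * ((2 * K) * x + (4 * K + 1) * (4 * c * x)) := by
        have := le_mul_of_one_le_right (a := 2 * K) (by positivity) hx1
        gcongr
    _ = _ := by ring

lemma totalLoss_small {t : ℝ} (b a : ℝ) (ht : 0 < t) {δ ε : ℝ} (hδ : 0 < δ) (hε : 0 < ε) :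
    ∃ n₀ : ℕ, ∀ n : ℕ, n₀ ≤ n → 1 ≤ n ∧ 1 < δ * n ∧ totalLoss t b a n / (δ * n - 1) < ε := by
  obtain ⟨D, hD, h⟩ := totalLoss_le b a ht
  set R : ℝ := max 1 (max (2 / δ) (2 * D / (δ * ε))) with hR
  have hR1 : 1 ≤ R := le_max_left _ _
  have hR2 : 2 / δ ≤ R := (le_max_left _ _).trans (le_max_right _ _)
  have hR3 : 2 * D / (δ * ε) ≤ R := (le_max_right _ _).trans (le_max_right _ _)
  refine ⟨⌈R ^ 4⌉₊ + 1, fun n hn => ?_⟩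
  have hn1 : 1 ≤ n := by omega
  have hnR : R ^ 4 < n := by
    refine (Nat.le_ceil _).trans_lt ?_
    exact_mod_cast hn
  have hL := h n hn1
  set x : ℝ := (n : ℝ) ^ (1 / 4 : ℝ) with hx
  have hx0 : 0 ≤ x := by positivity
  have hx4 : x ^ 4 = n := by
    rw [hx, ← Real.rpow_natCast, ← Real.rpow_mul (by positivity)]; norm_num
  have hRx : R < x := by
    rw [← hx4] at hnR
    exact lt_of_pow_lt_pow_left₀ 4 hx0 hnR
  have hx1 : 1 < x := hR1.trans_lt hRx
  have h2 : 2 < δ * x := by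
    rw [div_le_iff₀ hδ] at hR2
    nlinarith
  have h3 : 2 * D < δ * ε * x := by
    rw [div_le_iff₀ (by positivity)] at hR3
    nlinarith [mul_pos hδ hε]
  have hx3 : 1 < x ^ 3 := one_lt_pow₀ hx1 (by norm_num)
  have h4 : 2 < δ * n := by
    rw [← hx4]
    nlinarith
  refine ⟨hn1, by linarith, ?_⟩
  rw [div_lt_iff₀ (by linarith)]
  have h5 : δ * n / 2 ≤ δ * n - 1 := by linarith
  calc totalLoss t b a n ≤ D * x ^ 3 := hL
    _ < (δ * ε * x / 2) * x ^ 3 := mul_lt_mul_of_pos_right (by linarith) (by positivity)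
    _ = ε * (δ * n / 2) := by rw [← hx4]; ring
    _ ≤ _ := mul_le_mul_of_nonneg_left h5 hε.le

end Tail

/-- for fixed `0 < b ≤ a`, `t > 0` and `δ > 0`,
`lim_{n→∞} sup_{m ≤ n} sup_{ω : weights in [b²,a²]}
  Pr( (1/(m+n)) |log det(√t I_N + Y_{A(ω)}) - log Φ(t, A(ω))| > δ ) = 0`. -/
theorem bipartite_concentration_at_log_matching_polynomial
    (b a : ℝ) (hb : 0 < b) (hba : b ≤ a) (t : ℝ) (ht : 0 < t)
    (δ : ℝ) (hδ : 0 < δ) :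
    ∀ ε : ℝ, 0 < ε → ∃ n₀ : ℕ, ∀ n : ℕ, n₀ ≤ n → ∀ m : ℕ, m ≤ n →
      ∀ w : Fin m → Fin n → ℝ, (∀ i j, w i j ∈ Set.Icc (b ^ 2) (a ^ 2)) →
        gaussPi (m + n) {ξ | δ < (1 / ((m : ℝ) + n)) *
            |Real.log ((Real.sqrt t • (1 : Matrix (Fin (m + n)) (Fin (m + n)) ℝ) +
                sampleY (bipartiteSkew w) ξ).det) -
              Real.log (PhiFull (bipartiteSkew w) t)|} <
          ENNReal.ofReal ε := by
  intro ε hε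
  obtain ⟨n₀, hn₀⟩ := totalLoss_small b a ht hδ hε
  refine ⟨n₀, fun n hn m hmn w hw => ?_⟩
  obtain ⟨hn1, hδn, hloss⟩ := hn₀ n hn
  have hw0 : ∀ i j, 0 ≤ w i j := fun i j => (sq_nonneg b).trans (hw i j).1
  have hn1' : (1 : ℝ) ≤ n := by exact_mod_cast hn1
  have hN : (0 : ℝ) < m + n := by positivity
  have hs : 0 < √t ^ (n - m) := pow_pos (Real.sqrt_pos.2 ht) _
  have hΨ := matchGen_pos ht w hw0 ∅
  obtain ⟨hI, hE⟩ := integral_detMask ht w hw0 ∅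
  set S : Set (Fin m → Fin n → ℝ) :=
    {G | δ * (m + n) < |Real.log (detMask t w ∅ G) - Real.log (matchGen t w ∅)|} with hS
  have hSm : MeasurableSet S := by
    have hd := (continuous_detMask t w ∅).measurable
    exact measurableSet_lt measurable_const
      ((Real.measurable_log.comp hd).sub measurable_const).abs
  have hevent : {ξ | δ < (1 / ((m : ℝ) + n)) *
      |Real.log ((Real.sqrt t • (1 : Matrix (Fin (m + n)) (Fin (m + n)) ℝ) +
        sampleY (bipartiteSkew w) ξ).det) - Real.log (PhiFull (bipartiteSkew w) t)|} =
      crossEntries ⁻¹' S := by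
    ext ξ
    simp only [Set.mem_ofPred_eq, Set.mem_preimage, hS]
    rw [det_sampleY ht hmn, PhiFull_bipartiteSkew ht hmn w hw0,
      Real.log_mul hs.ne' (detMask_pos ht _ _ _).ne', Real.log_mul hs.ne' hΨ.ne',
      add_sub_add_left_eq_sub, one_div, ← div_eq_inv_mul, lt_div_iff₀ hN]
  rw [hevent, (measurePreserving_crossEntries m n).measure_preimage hSm.nullMeasurableSet,
    ← ofReal_measureReal]
  refine (ENNReal.ofReal_lt_ofReal_iff hε).2 ?_
  have hsq : Nat.sqrt n + 1 ≤ n + 1 := Nat.succ_le_succ (Nat.sqrt_le_self n)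
  have hlow := log_matchGen_le ht hb (Nat.succ_pos (Nat.sqrt n)) hsq w hw hmn
  have hq' : ((Nat.sqrt n + 1 + m - (n + 1) : ℕ) : ℝ) ≤ (Nat.sqrt n + 1 : ℕ) := by
    exact_mod_cast (by omega : Nat.sqrt n + 1 + m - (n + 1) ≤ Nat.sqrt n + 1)
  have hl0 := lossEll_nonneg (a := a) ht n
  have hlow' : Real.log (matchGen t w ∅) - totalLoss t b a n ≤
      ∫ G, Real.log (detMask t w ∅ G) ∂(matMeas m n) := by
    refine le_trans ?_ hlow
    have := mul_le_mul_of_nonneg_right hq' hl0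
    unfold totalLoss
    linarith
  have hT0 : 0 ≤ totalLoss t b a n := by
    have := rowLoss_nonneg (b := b) (a := a) ht n (Nat.sqrt n + 1)
    unfold totalLoss
    positivity
  have hδN : δ * n ≤ δ * (m + n) :=
    mul_le_mul_of_nonneg_left (le_add_of_nonneg_left (Nat.cast_nonneg m)) hδ.le
  have htail := tail_bound (detMask_pos ht w ∅) hΨ hI (integrable_log_detMask ht w hw0 ∅) hE hlow'
    (hδn.trans_le hδN)
  calc (matMeas m n).real S ≤ totalLoss t b a n / (δ * (m + n) - 1) := htail
    _ ≤ totalLoss t b a n / (δ * n - 1) :=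
      div_le_div_of_nonneg_left hT0 (by linarith) (by linarith)
    _ < ε := hloss
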